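/- Suppose Γ is a configuration satisfying the Working Conditions with at least one bad vertex, and let φ be an embedding of Γ into ℤ^N. Suppose x is a vertex of Γ that is not bad and is adjacent to two bad vertices. If v is a vertex with v ≠ x and supp(φ(v)) ∩ supp(φ(x)) ≠ ∅, then v belongs to the bad part of Γ. -/

import Mathlib

namespace LensPaper

/-- A finite weighted simple graph: the combinatorial data underlying a configuration
(a disjoint union of weighted linear graphs).  The fact that every connected component
is a path is recorded separately by `Config.IsLinear`. -/
structure Config where
  V : Type
  fin : Fintype V
  deq : DecidableEq V
  graph : SimpleGraph V
  adjDec : DecidableRel graph.Adj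
  w : V → ℤ

attribute [instance] Config.fin Config.deq Config.adjDec

namespace Config

/-- The degree of a vertex. -/
noncomputable def deg (C : Config) (v : C.V) : ℕ := (C.graph.neighborSet v).ncard

/-- A configuration: every component is a path, i.e. all degrees are at most `2` and the
graph is acyclic. -/
def IsLinear (C : Config) : Prop :=
  (∀ v : C.V, C.deg v ≤ 2) ∧ C.graph.IsAcyclic

/-- The adjusted weight `w'(v) = w(v) - deg(v)`. -/
noncomputable def adjw (C : Config) (v : C.V) : ℤ := C.w v - C.deg v

/-- A vertex is bad if it is adjacent to two distinct vertices of positive adjusted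
weight. -/
def IsBad (C : Config) (x : C.V) : Prop :=
  ∃ u v : C.V, u ≠ v ∧ C.graph.Adj x u ∧ C.graph.Adj x v ∧ 0 < C.adjw u ∧ 0 < C.adjw v

/-- A leaf: a vertex of degree at most one. -/
def IsLeaf (C : Config) (v : C.V) : Prop := C.deg v ≤ 1

/-- `v 0, v 1, …, v m` is a chain of consecutive (distinct) vertices. -/
def IsChain (C : Config) (m : ℕ) (v : ℕ → C.V) : Prop :=
  (∀ i ≤ m, ∀ j ≤ m, v i = v j → i = j) ∧ ∀ i < m, C.graph.Adj (v i) (v (i + 1))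

/-- The chain `v 0, …, v m` has the list `p` as its sequence of adjusted weights. -/
def ChainPattern (C : Config) (m : ℕ) (v : ℕ → C.V) (p : List ℤ) : Prop :=
  C.IsChain m v ∧ m + 1 = p.length ∧ ∀ i : Fin p.length, C.adjw (v i) = p.get i

/-- `Γ` contains a chain of consecutive vertices whose adjusted weights, read in order,
form the list `p`. -/
def HasPattern (C : Config) (p : List ℤ) : Prop := ∃ m v, C.ChainPattern m v p

/-- A chain realizing a bad-part pattern `p` (each entry of `p` is an adjusted weight
together with a flag marking the bad positions): the chain has the prescribed adjusted
weights, and the bad vertices of the configuration are exactly the vertices of the chain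
in the flagged positions. -/
def IsBadPartChain (C : Config) (p : List (ℤ × Bool)) (m : ℕ) (v : ℕ → C.V) : Prop :=
  C.IsChain m v ∧ m + 1 = p.length ∧
  (∀ i : Fin p.length, C.adjw (v i) = (p.get i).1) ∧
  (∀ x : C.V, C.IsBad x ↔ ∃ i : Fin p.length, (p.get i).2 = true ∧ v i = x)

end Config

/-- The chains of adjusted weights forbidden by Working Condition VI. -/
def forbiddenPatterns : List (List ℤ) :=
  [[1, 0, 0, 2], [1, 0, 0, 3], [1, 0, 0, 0, 3], [1, 1, 0, 0, 1, 2], [3, 1, 0, 0, 1],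
   [1, 0, 1, 2], [1, 0, 1, 3], [1, 1, 0, 2], [1, 1, 0, 1, 1, 2]]

/-- The bad-part patterns of Working Condition VII; `true` marks the bad positions. -/
def badPatterns : List (List (ℤ × Bool)) :=
  [[(1, false), (0, true), (1, false)],
   [(1, false), (0, true), (2, false)],
   [(1, false), (0, true), (3, false)],
   [(1, false), (1, true), (1, false)],
   [(1, false), (1, true), (2, false)],
   [(1, false), (2, true), (1, false)],
   [(1, false), (0, true), (1, false), (0, true), (1, false)],
   [(1, false), (0, true), (1, false), (0, true), (2, false)],
   [(1, false), (0, true), (1, false), (1, true), (1, false)],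
   [(1, false), (0, true), (1, false), (1, true), (2, false)],
   [(1, false), (1, true), (1, true), (1, false)],
   [(1, false), (1, true), (1, true), (1, true), (1, false)],
   [(1, false), (1, true), (2, true), (1, false)]]

namespace Config

/-- The Working Conditions (I)–(VII). -/
def WorkingConditions (C : Config) : Prop :=
  (∀ v : C.V, 2 ≤ C.w v) ∧
  (∀ v : C.V, C.adjw v ≤ 3) ∧
  (∀ u v : C.V, 1 < C.adjw u → 1 < C.adjw v → u = v) ∧
  (∀ v x : C.V, 1 < C.adjw v → C.IsBad x → C.adjw x = 1 → C.graph.Adj x v) ∧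
  ((∃ v : C.V, C.adjw v = 3) →
     ∀ u u' : C.V, C.graph.Adj u u' → C.adjw u = 1 → C.adjw u' = 1 → False) ∧
  (∀ u v x : C.V, C.graph.Adj u v → C.adjw u = 1 → C.adjw v = 1 →
     C.IsBad x → C.adjw x = 2 → C.graph.Adj x u ∨ C.graph.Adj x v) ∧
  (∀ p ∈ forbiddenPatterns, ¬ C.HasPattern p) ∧
  ((∃ x : C.V, C.IsBad x) → ∃ p ∈ badPatterns, ∃ m v, C.IsBadPartChain p m v)

end Config

/-- The standard inner product on `ℤ^N`. -/
def dot {N : ℕ} (x y : Fin N → ℤ) : ℤ := ∑ i, x i * y i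

/-- The support of a vector of `ℤ^N` with respect to the standard orthonormal basis. -/
def supp {N : ℕ} (x : Fin N → ℤ) : Finset (Fin N) :=
  Finset.univ.filter fun i => x i ≠ 0

namespace Config

/-- An embedding of a configuration into `ℤ^N`. -/
def IsEmbedding (C : Config) (N : ℕ) (φ : C.V → Fin N → ℤ) : Prop :=
  ∀ u v : C.V, dot (φ u) (φ v) =
    if u = v then C.w u else if C.graph.Adj u v then -1 else 0

/-- The restriction of `φ` to `S` is standard. -/
def IsStandardOn (C : Config) (N : ℕ) (φ : C.V → Fin N → ℤ) (S : Set C.V) : Prop :=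
  ∀ u ∈ S, ∀ v ∈ S,
    ((supp (φ u) ∩ supp (φ v)).card : ℤ) =
      if u = v then C.w v else if C.graph.Adj u v then 1 else 0

/-- A standard embedding. -/
def IsStandard (C : Config) (N : ℕ) (φ : C.V → Fin N → ℤ) : Prop :=
  C.IsStandardOn N φ Set.univ

/-- The restriction of `φ` to `S` is semi-standard at `x`. -/
def IsSemiStandardAtOn (C : Config) (N : ℕ) (φ : C.V → Fin N → ℤ) (x : C.V)
    (S : Set C.V) : Prop :=
  (∀ u ∈ S, ∀ v ∈ S,
    ((supp (φ u) ∩ supp (φ v)).card : ℤ) =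
      if u = v then C.w v
      else if C.graph.Adj u v then 1
      else if C.graph.Adj x u ∧ C.graph.Adj x v then 2
      else 0) ∧
  (∀ u ∈ S, ∀ v ∈ S, u ≠ v → C.graph.Adj x u → C.graph.Adj x v →
    (supp (φ u) ∩ supp (φ x) ∩ supp (φ v)).card = 1)

/-- A semi-standard embedding: semi-standard at some bad vertex. -/
def IsSemiStandard (C : Config) (N : ℕ) (φ : C.V → Fin N → ℤ) : Prop :=
  ∃ x : C.V, C.IsBad x ∧ C.IsSemiStandardAtOn N φ x Set.univ

/-- A candidate for the extended bad part: a chain containing the bad part whose two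
ends are either leaves or preceded by two consecutive vertices of vanishing adjusted
weight. -/
def IsEBPCand (C : Config) (m : ℕ) (v : ℕ → C.V) : Prop :=
  C.IsChain m v ∧
  (∀ p ∈ badPatterns, ∀ mb vb, C.IsBadPartChain p mb vb →
     ∀ i ≤ mb, ∃ j ≤ m, v j = vb i) ∧
  (C.IsLeaf (v 0) ∨ (2 ≤ m ∧ C.adjw (v 1) = 0 ∧ C.adjw (v 2) = 0)) ∧
  (C.IsLeaf (v m) ∨ (2 ≤ m ∧ C.adjw (v (m - 1)) = 0 ∧ C.adjw (v (m - 2)) = 0))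

/-- The extended bad part: a candidate with the fewest vertices. -/
def IsExtBadPart (C : Config) (m : ℕ) (v : ℕ → C.V) : Prop :=
  C.IsEBPCand m v ∧ ∀ m' v', C.IsEBPCand m' v' → m ≤ m'

/-- The set of vertices of the chain `v 0, …, v m`. -/
def ebpSet (C : Config) (m : ℕ) (v : ℕ → C.V) : Set C.V := {y | ∃ i ≤ m, v i = y}

/-- The outside part of `Γ` relative to the extended bad part `v 0, …, v m`. -/
def OutsidePart (C : Config) (m : ℕ) (v : ℕ → C.V) : Set C.V :=
  {x | ∀ i ≤ m, v i ≠ x}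
  ∪ {x | ¬ C.IsLeaf (v 0) ∧ (x = v 0 ∨ x = v 1 ∨ x = v 2)}
  ∪ {x | ¬ C.IsLeaf (v m) ∧ (x = v m ∨ x = v (m - 1) ∨ x = v (m - 2))}

/-- A screw at the front end of the extended bad part. -/
def IsFrontScrew (C : Config) (N : ℕ) (φ : C.V → Fin N → ℤ) (m : ℕ) (v : ℕ → C.V)
    (e : Fin N) : Prop :=
  ¬ C.IsLeaf (v 0) ∧ 3 ≤ m ∧ φ (v 2) e ≠ 0 ∧ φ (v 3) e ≠ 0

/-- A screw at the back end of the extended bad part. -/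
def IsBackScrew (C : Config) (N : ℕ) (φ : C.V → Fin N → ℤ) (m : ℕ) (v : ℕ → C.V)
    (e : Fin N) : Prop :=
  ¬ C.IsLeaf (v m) ∧ 3 ≤ m ∧ φ (v (m - 2)) e ≠ 0 ∧ φ (v (m - 3)) e ≠ 0

/-- All screws of `Γ` (with respect to `φ`) are clean. -/
def AllScrewsClean (C : Config) (N : ℕ) (φ : C.V → Fin N → ℤ) (m : ℕ)
    (v : ℕ → C.V) : Prop :=
  (∀ e : Fin N, C.IsFrontScrew N φ m v e →
    ∀ u : C.V, u ≠ v 2 → u ≠ v 3 → φ u e = 0) ∧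
  (∀ e : Fin N, C.IsBackScrew N φ m v e →
    ∀ u : C.V, u ≠ v (m - 2) → u ≠ v (m - 3) → φ u e = 0)

end Config

/-!
Only the patterns with two separated bad vertices occur: the bad part is a chain `a, b, x, c, d`
in which `φ x` has norm three. Up to orthonormal coordinates `φ x = e₁ + e₂ + e₃` and
`φ b = f - e₁`, while `φ c` is one of `g - e₂`, `g + h - e₂` and `h - f - e₁`. A vertex `v` outside
the chain is orthogonal to `φ b`, `φ x` and `φ c`, so one or two integers determine its coordinates
along this frame, and Bessel's inequality together with the bound on its norm confines them to
`0` and `±1`. If they do not vanish, subtracting the frame components leaves such a short residual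
that the neighbours of `v`, whose residuals have the same inner products, are determined one after
another along the path of `v` until a norm becomes negative, two heavy vertices appear, or one of
the forbidden patterns shows up. Hence `φ v` is orthogonal to `e₁`, `e₂` and `e₃`, which is the
disjointness of its support from that of `φ x`.
-/

section

open scoped Matrix

theorem eq_neg_one_or_zero_or_one {n : ℤ} (h : n * n ≤ 3) : n = -1 ∨ n = 0 ∨ n = 1 := by
  have h₁ : -1 ≤ n := by nlinarith
  have h₂ : n ≤ 1 := by nlinarith
  omega

section IntegralVectors


variable {ι : Type*} [Fintype ι]

/-- A finite list of pairwise orthogonal unit vectors of `ℤ^ι`. -/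
def IsOrthonormal (L : List (ι → ℤ)) : Prop :=
  (∀ e ∈ L, e ⬝ᵥ e = 1) ∧ L.Pairwise fun e f => e ⬝ᵥ f = 0

/-- The component of `p` orthogonal to the members of `L`, for orthonormal `L`. -/
def residual (L : List (ι → ℤ)) (p : ι → ℤ) : ι → ℤ :=
  p - (L.map fun e => (e ⬝ᵥ p) • e).sum

theorem residual_perm {L L' : List (ι → ℤ)} (h : L.Perm L') (p : ι → ℤ) :
    residual L p = residual L' p := by
  rw [residual, residual, (h.map _).sum_eq]

theorem residual_dotProduct (L : List (ι → ℤ)) (p q : ι → ℤ) :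
    residual L p ⬝ᵥ q = p ⬝ᵥ q - (L.map fun e => (e ⬝ᵥ p) * (e ⬝ᵥ q)).sum := by
  have key : (L.map fun e => (e ⬝ᵥ p) • e).sum ⬝ᵥ q
      = (L.map fun e => (e ⬝ᵥ p) * (e ⬝ᵥ q)).sum := by
    induction L with
    | nil => simp
    | cons e L ih => simp only [List.map_cons, List.sum_cons, add_dotProduct, smul_dotProduct,
        smul_eq_mul, ih]
  rw [residual, sub_dotProduct, key]

theorem dotProduct_residual_of_orthogonal {L : List (ι → ℤ)} {p : ι → ℤ}
    (h : ∀ e ∈ L, e ⬝ᵥ p = 0) (q : ι → ℤ) : p ⬝ᵥ residual L q = p ⬝ᵥ q := by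
  rw [dotProduct_comm, residual_dotProduct, dotProduct_comm, sub_eq_self]
  refine List.sum_eq_zero fun n hn => ?_
  obtain ⟨e, he, rfl⟩ := List.mem_map.mp hn
  rw [h e he, mul_zero]

theorem IsOrthonormal.sum_mul_dotProduct {L : List (ι → ℤ)} (hL : IsOrthonormal L) {e : ι → ℤ}
    (he : e ∈ L) (c : (ι → ℤ) → ℤ) : (L.map fun f => c f * (f ⬝ᵥ e)).sum = c e := by
  obtain ⟨hunit, hpair⟩ := hL
  induction L with
  | nil => simp at he
  | cons f L ih =>
    rw [List.pairwise_cons] at hpair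
    rw [List.forall_mem_cons] at hunit
    rw [List.map_cons, List.sum_cons]
    rcases List.mem_cons.mp he with rfl | he
    · have hrest : (L.map fun g => c g * (g ⬝ᵥ e)).sum = 0 := List.sum_eq_zero fun n hn => by
        obtain ⟨g, hg, rfl⟩ := List.mem_map.mp hn
        rw [dotProduct_comm, hpair.1 g hg, mul_zero]
      rw [hrest, hunit.1, mul_one, add_zero]
    · rw [hpair.1 e he, ih he hunit.2 hpair.2, mul_zero, zero_add]

theorem IsOrthonormal.residual_dotProduct_eq_zero {L : List (ι → ℤ)} (hL : IsOrthonormal L)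
    {e : ι → ℤ} (he : e ∈ L) (p : ι → ℤ) : residual L p ⬝ᵥ e = 0 := by
  rw [residual_dotProduct, hL.sum_mul_dotProduct he (· ⬝ᵥ p), dotProduct_comm, sub_self]

theorem IsOrthonormal.residual_dotProduct_residual {L : List (ι → ℤ)} (hL : IsOrthonormal L)
    (p q : ι → ℤ) :
    residual L p ⬝ᵥ residual L q = p ⬝ᵥ q - (L.map fun e => (e ⬝ᵥ p) * (e ⬝ᵥ q)).sum := by
  rw [dotProduct_residual_of_orthogonal, residual_dotProduct]
  intro e he
  rw [dotProduct_comm, hL.residual_dotProduct_eq_zero he]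

theorem dotProduct_self_nonneg_int (p : ι → ℤ) : 0 ≤ p ⬝ᵥ p :=
  Finset.sum_nonneg fun i _ => mul_self_nonneg (p i)

theorem dotProduct_eq_zero_of_self_nonpos {p : ι → ℤ} (hp : p ⬝ᵥ p ≤ 0) (q : ι → ℤ) :
    p ⬝ᵥ q = 0 := by
  rw [dotProduct_self_eq_zero.mp (le_antisymm hp (dotProduct_self_nonneg_int p)), zero_dotProduct]

theorem IsOrthonormal.sum_sq_le {L : List (ι → ℤ)} (hL : IsOrthonormal L) (p : ι → ℤ) :
    (L.map fun e => (e ⬝ᵥ p) * (e ⬝ᵥ p)).sum ≤ p ⬝ᵥ p := by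
  have h := dotProduct_self_nonneg_int (residual L p)
  rw [hL.residual_dotProduct_residual] at h
  linarith

theorem IsOrthonormal.dotProduct_eq_sum {L : List (ι → ℤ)} (hL : IsOrthonormal L) {p : ι → ℤ}
    (hp : p ⬝ᵥ p = (L.map fun e => (e ⬝ᵥ p) * (e ⬝ᵥ p)).sum) (q : ι → ℤ) :
    p ⬝ᵥ q = (L.map fun e => (e ⬝ᵥ p) * (e ⬝ᵥ q)).sum := by
  have h : residual L p ⬝ᵥ residual L p = 0 := by
    rw [hL.residual_dotProduct_residual, hp, sub_self]
  have h' := residual_dotProduct L p q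
  rw [dotProduct_self_eq_zero.mp h, zero_dotProduct] at h'
  linarith

theorem two_mul_abs_dotProduct_le (p q : ι → ℤ) : 2 * |p ⬝ᵥ q| ≤ p ⬝ᵥ p + q ⬝ᵥ q := by
  have hadd := dotProduct_self_nonneg_int (p + q)
  have hsub := dotProduct_self_nonneg_int (p - q)
  simp only [add_dotProduct, dotProduct_add, sub_dotProduct, dotProduct_sub,
    dotProduct_comm q p] at hadd hsub
  have h : |p ⬝ᵥ q| * 2 ≤ p ⬝ᵥ p + q ⬝ᵥ q := by
    rcases abs_cases (p ⬝ᵥ q) with ⟨h, -⟩ | ⟨h, -⟩ <;> rw [h] <;> linarith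
  linarith

theorem exists_unit_dotProduct_eq_one {u : ι → ℤ} (hu : u ≠ 0) (hu3 : u ⬝ᵥ u ≤ 3) :
    ∃ e : ι → ℤ, e ⬝ᵥ e = 1 ∧ e ⬝ᵥ u = 1 := by
  classical
  obtain ⟨i, hi⟩ : ∃ i, u i ≠ 0 := Function.ne_iff.mp hu
  have hle : u i * u i ≤ 3 :=
    (Finset.single_le_sum (f := fun j => u j * u j) (fun j _ => mul_self_nonneg (u j))
      (Finset.mem_univ i)).trans hu3
  have hsq : u i * u i = 1 := by
    rcases eq_neg_one_or_zero_or_one hle with h | h | h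
    · simp [h]
    · exact absurd h hi
    · simp [h]
  exact ⟨Pi.single i (u i), by simp [hsq], by simp [hsq]⟩

theorem unit_dotProduct_unit {e f : ι → ℤ} (he : e ⬝ᵥ e = 1) (hf : f ⬝ᵥ f = 1) :
    e ⬝ᵥ f = 0 ∨ f = e ∨ f = -e := by
  have hle := two_mul_abs_dotProduct_le e f
  rcases lt_trichotomy (e ⬝ᵥ f) 0 with h | h | h
  · refine Or.inr (Or.inr (eq_neg_of_add_eq_zero_left (dotProduct_self_eq_zero.mp ?_)))
    rw [abs_of_neg h] at hle
    simp only [add_dotProduct, dotProduct_add, dotProduct_comm f e]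
    omega
  · exact Or.inl h
  · refine Or.inr (Or.inl (sub_eq_zero.mp (dotProduct_self_eq_zero.mp ?_)))
    rw [abs_of_pos h] at hle
    simp only [sub_dotProduct, dotProduct_sub, dotProduct_comm f e]
    omega

theorem eq_zero_of_unit_dotProduct_eq_zero {e u : ι → ℤ} (he : e ⬝ᵥ e = 1) (heu : e ⬝ᵥ u = 0)
    {i : ι} (hi : e i ≠ 0) : u i = 0 := by
  classical
  rcases unit_dotProduct_unit (f := Pi.single i 1) he (by simp) with h | h | h
  · simp [hi] at h
  · simpa [← h] using heu
  · rw [← neg_eq_iff_eq_neg] at h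
    simpa [← h] using heu

theorem isOrthonormal_nil : IsOrthonormal ([] : List (ι → ℤ)) := by simp [IsOrthonormal]

theorem isOrthonormal_cons {e : ι → ℤ} {L : List (ι → ℤ)} :
    IsOrthonormal (e :: L) ↔ (e ⬝ᵥ e = 1 ∧ ∀ f ∈ L, e ⬝ᵥ f = 0) ∧ IsOrthonormal L := by
  simp only [IsOrthonormal, List.forall_mem_cons, List.pairwise_cons]
  tauto

theorem IsOrthonormal.perm {L L' : List (ι → ℤ)} (hL : IsOrthonormal L) (h : L.Perm L') :
    IsOrthonormal L' :=
  ⟨fun e he => hL.1 e (h.mem_iff.mpr he), hL.2.perm h fun he => (dotProduct_comm _ _).trans he⟩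

theorem exists_orthonormal_pair {u : ι → ℤ} (hu : u ⬝ᵥ u = 2) :
    ∃ e f, IsOrthonormal [e, f] ∧ u = e + f := by
  obtain ⟨e, he, heu⟩ := exists_unit_dotProduct_eq_one
    (fun h => by simp [h] at hu : u ≠ 0) (by omega)
  have hue := dotProduct_comm u e
  refine ⟨e, u - e, ?_, by abel⟩
  simp only [isOrthonormal_cons, isOrthonormal_nil, List.forall_mem_singleton, sub_dotProduct,
    dotProduct_sub, List.not_mem_nil, false_imp_iff, implies_true, and_true]
  omega

theorem orthogonal_of_orthogonal_add {e f g : ι → ℤ} (he : e ⬝ᵥ e = 1)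
    (hfg : IsOrthonormal [f, g]) (h : e ⬝ᵥ (f + g) = 0) : e ⬝ᵥ f = 0 ∧ e ⬝ᵥ g = 0 := by
  have hff : f ⬝ᵥ f = 1 := hfg.1 f (by simp)
  have hfg0 : f ⬝ᵥ g = 0 := by simpa using hfg.2
  rw [dotProduct_add] at h
  have hef : e ⬝ᵥ f = 0 := by
    rcases unit_dotProduct_unit he hff with h' | rfl | rfl
    · exact h'
    · omega
    · simp only [neg_dotProduct, dotProduct_neg] at *
      omega
  omega

theorem exists_orthonormal_triple {u : ι → ℤ} (hu : u ⬝ᵥ u = 3) :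
    ∃ e f g, IsOrthonormal [e, f, g] ∧ u = e + f + g := by
  obtain ⟨e, he, heu⟩ := exists_unit_dotProduct_eq_one
    (fun h => by simp [h] at hu : u ≠ 0) (by omega)
  have hue := dotProduct_comm u e
  obtain ⟨f, g, hfg, hsum⟩ := exists_orthonormal_pair (u := u - e)
    (by simp only [sub_dotProduct, dotProduct_sub]; omega)
  have horth := orthogonal_of_orthogonal_add he hfg
    (by rw [← hsum, dotProduct_sub, heu, he, sub_self])
  exact ⟨e, f, g, isOrthonormal_cons.mpr ⟨⟨he, by simpa using horth⟩, hfg⟩,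
    by rw [add_assoc, ← hsum]; abel⟩

theorem IsOrthonormal.residual_cons {L : List (ι → ℤ)} (hL : IsOrthonormal L) {u : ι → ℤ}
    (hu : u ⬝ᵥ u = (L.map fun e => (e ⬝ᵥ u) * (e ⬝ᵥ u)).sum + 1) :
    IsOrthonormal (residual L u :: L) := by
  refine isOrthonormal_cons.mpr ⟨⟨?_, fun e he => hL.residual_dotProduct_eq_zero he u⟩, hL⟩
  rw [hL.residual_dotProduct_residual, hu, add_sub_cancel_left]

theorem IsOrthonormal.exists_residual_eq_add {L : List (ι → ℤ)} (hL : IsOrthonormal L)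
    {u : ι → ℤ} (hu : u ⬝ᵥ u = (L.map fun e => (e ⬝ᵥ u) * (e ⬝ᵥ u)).sum + 2) :
    ∃ g h, IsOrthonormal (g :: h :: L) ∧ residual L u = g + h := by
  obtain ⟨g, h, hgh, hsum⟩ := exists_orthonormal_pair (u := residual L u)
    (by rw [hL.residual_dotProduct_residual, hu, add_sub_cancel_left])
  have horth (e) (he : e ∈ L) : e ⬝ᵥ g = 0 ∧ e ⬝ᵥ h = 0 := orthogonal_of_orthogonal_add
    (hL.1 e he) hgh (by rw [← hsum, dotProduct_comm, hL.residual_dotProduct_eq_zero he])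
  refine ⟨g, h, ?_, hsum⟩
  simp only [isOrthonormal_cons, List.forall_mem_cons, List.not_mem_nil, false_imp_iff,
    implies_true, and_true] at hgh ⊢
  exact ⟨⟨hgh.1.1, hgh.1.2, fun e he => dotProduct_comm g e ▸ (horth e he).1⟩,
    ⟨hgh.2.1, fun e he => dotProduct_comm h e ▸ (horth e he).2⟩, hL⟩

-- The vector `r + q + 2 • p + 3 • m` has norm `r ⬝ᵥ r - 3`.
theorem dotProduct_add_two_mul_add_three_mul_eq_zero {m p q r : ι → ℤ} (hm : m ⬝ᵥ m = 1)
    (hp : p ⬝ᵥ p = 2) (hq : q ⬝ᵥ q = 2) (hr : r ⬝ᵥ r ≤ 3) (hmp : m ⬝ᵥ p = -1)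
    (hmr : m ⬝ᵥ r = -1) (hpq : p ⬝ᵥ q = -1) (hmq : m ⬝ᵥ q = 0) (hpr : p ⬝ᵥ r = 0)
    (hqr : q ⬝ᵥ r = 0) (t : ι → ℤ) :
    r ⬝ᵥ t + q ⬝ᵥ t + 2 * (p ⬝ᵥ t) + 3 * (m ⬝ᵥ t) = 0 := by
  have hnorm : (r + q + (2 : ℤ) • p + (3 : ℤ) • m) ⬝ᵥ (r + q + (2 : ℤ) • p + (3 : ℤ) • m) ≤ 0 := by
    simp only [add_dotProduct, dotProduct_add, smul_dotProduct, dotProduct_smul, smul_eq_mul,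
      dotProduct_comm r q, dotProduct_comm r p, dotProduct_comm r m, dotProduct_comm q p,
      dotProduct_comm q m, dotProduct_comm p m]
    omega
  simpa only [add_dotProduct, smul_dotProduct, smul_eq_mul]
    using dotProduct_eq_zero_of_self_nonpos hnorm t

end IntegralVectors

section Graph

variable {V : Type*} {G : SimpleGraph V}

/-- Consecutive entries of the list are adjacent and no entry equals the one two places later;
in an acyclic graph these are exactly the vertex sequences of paths. -/
def NonBacktracking (G : SimpleGraph V) : List V → Prop
  | [] => True
  | [_] => True
  | [a, b] => G.Adj a b
  | a :: b :: c :: l => G.Adj a b ∧ a ≠ c ∧ NonBacktracking G (b :: c :: l)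

namespace NonBacktracking

theorem tail {a : V} {l : List V} (h : NonBacktracking G (a :: l)) : NonBacktracking G l := by
  match l, h with
  | [], _ => trivial
  | [_], _ => trivial
  | _ :: _ :: _, h => exact h.2.2

theorem adj_head {a b : V} {l : List V} (h : NonBacktracking G (a :: b :: l)) : G.Adj a b := by
  match l, h with
  | [], h => exact h
  | _ :: _, h => exact h.1

theorem adj_getElem_succ {l : List V} (h : NonBacktracking G l) (i : ℕ) (hi : i + 1 < l.length) :
    G.Adj l[i] l[i + 1] := by
  induction i generalizing l with
  | zero =>
    match l, h with
    | _ :: _ :: _, h => exact h.adj_head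
  | succ i ih =>
    match l, h with
    | _ :: l, h => exact ih h.tail (by simpa using hi)

theorem exists_isPath (hG : G.IsAcyclic) {a b : V} {l : List V}
    (h : NonBacktracking G (a :: b :: l)) :
    ∃ (z : V) (p : G.Walk a z), p.support = a :: b :: l ∧ p.IsPath ∧ p.snd = b := by
  induction l generalizing a b with
  | nil =>
    have hab : G.Adj a b := h
    exact ⟨b, .cons hab .nil, by simp, by simp [hab.ne], by simp⟩
  | cons c l ih =>
    obtain ⟨hab, hac, htail⟩ := h
    obtain ⟨z, p, hsupp, hp, hsnd⟩ := ih htail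
    refine ⟨z, .cons hab p, by simp [hsupp], ?_, by simp⟩
    rw [SimpleGraph.Walk.cons_isPath_iff]
    exact ⟨hp, fun hmem => hac ((hG.eq_snd_of_adj_start hp hab.symm hmem).trans hsnd)⟩

theorem ne_and_not_adj_of_mem (hG : G.IsAcyclic) {a b y : V} {l : List V}
    (h : NonBacktracking G (a :: b :: l)) (hy : y ∈ l) : a ≠ y ∧ ¬ G.Adj a y := by
  obtain ⟨z, p, hsupp, hp, hsnd⟩ := h.exists_isPath hG
  have hnodup : (a :: b :: l).Nodup := hsupp ▸ hp.support_nodup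
  simp only [List.nodup_cons, List.mem_cons, not_or] at hnodup
  refine ⟨fun e => hnodup.1.2 (e ▸ hy), fun hadj => ?_⟩
  have hyb := hG.eq_snd_of_adj_start hp (w := y) hadj (by simp [hsupp, hy])
  exact hnodup.2.1 (hsnd ▸ hyb ▸ hy)

theorem ne_and_not_adj (hG : G.IsAcyclic) {l : List V} (h : NonBacktracking G l) {i j : ℕ}
    (hij : i + 2 ≤ j) (hj : j < l.length) : l[i] ≠ l[j] ∧ ¬ G.Adj l[i] l[j] := by
  induction l generalizing i j with
  | nil => simp at hj
  | cons a l ih =>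
    obtain ⟨j, rfl⟩ : ∃ k, j = k + 1 := ⟨j - 1, by omega⟩
    match i with
    | 0 =>
      match l, h with
      | _ :: l, h =>
        obtain ⟨j, rfl⟩ : ∃ k, j = k + 1 := ⟨j - 1, by omega⟩
        exact h.ne_and_not_adj_of_mem hG (List.getElem_mem _)
    | i + 1 => exact ih h.tail (by omega) (by simpa using hj)

theorem getElem_injective (hG : G.IsAcyclic) {l : List V} (h : NonBacktracking G l) {i j : ℕ}
    (hi : i < l.length) (hj : j < l.length) (hij : l[i] = l[j]) : i = j := by
  wlog hlt : i < j generalizing i j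
  · by_contra hne
    exact hne (this hj hi hij.symm (by omega)).symm
  rcases eq_or_lt_of_le (Nat.succ_le_of_lt hlt) with rfl | h2
  · exact absurd hij (h.adj_getElem_succ i hj).ne
  · exact absurd hij (h.ne_and_not_adj hG h2 hj).1

end NonBacktracking

end Graph

namespace Config

variable {C : Config}

theorem HasPattern.of_nonBacktracking (hC : C.graph.IsAcyclic) {l : List C.V} (hl : l ≠ [])
    (h : NonBacktracking C.graph l) : C.HasPattern (l.map C.adjw) := by
  have hpos : 0 < l.length := List.length_pos_iff.mpr hl
  have hget : ∀ i (hi : i < l.length), l.getD i (l[0]) = l[i] :=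
    fun i hi => List.getD_eq_getElem _ _ hi
  refine ⟨l.length - 1, fun i => l.getD i l[0], ⟨?_, ?_⟩, by simp; omega, ?_⟩
  · intro i hi j hj hij
    simp only [hget i (by omega), hget j (by omega)] at hij
    exact h.getElem_injective hC _ _ hij
  · intro i hi
    simp only [hget i (by omega), hget (i + 1) (by omega)]
    exact h.adj_getElem_succ i (by omega)
  · rintro ⟨i, hi⟩
    rw [List.length_map] at hi
    simp only [List.get_eq_getElem, List.getElem_map, hget i hi]

theorem deg_eq_two (hC : C.IsLinear) {p q r : C.V} (hq : C.graph.Adj p q) (hr : C.graph.Adj p r)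
    (hqr : q ≠ r) : C.deg p = 2 := by
  refine le_antisymm (hC.1 p) ?_
  rw [← Set.ncard_pair hqr]
  refine Set.ncard_le_ncard ?_ (Set.toFinite _)
  rintro y (rfl | rfl) <;> assumption

theorem eq_or_eq_of_adj (hC : C.IsLinear) {p q r y : C.V} (hq : C.graph.Adj p q)
    (hr : C.graph.Adj p r) (hqr : q ≠ r) (hy : C.graph.Adj p y) : y = q ∨ y = r := by
  have hpair : {q, r} = C.graph.neighborSet p := by
    refine Set.eq_of_subset_of_ncard_le ?_ ?_ (Set.toFinite _)
    · rintro y (rfl | rfl) <;> assumption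
    · rw [Set.ncard_pair hqr]
      exact hC.1 p
  exact hpair.symm.subset hy

theorem one_le_deg {p q : C.V} (h : C.graph.Adj p q) : 1 ≤ C.deg p :=
  (Set.ncard_pos (Set.toFinite _)).mpr ⟨q, h⟩

theorem exists_adj {p : C.V} (h : 1 ≤ C.deg p) : ∃ q, C.graph.Adj p q :=
  Set.nonempty_of_ncard_ne_zero (Nat.one_le_iff_ne_zero.mp h)

theorem exists_adj_ne {p : C.V} (h : C.deg p = 2) (q : C.V) : ∃ r, C.graph.Adj p r ∧ r ≠ q :=
  Set.exists_ne_of_one_lt_ncard (s := C.graph.neighborSet p) (one_lt_two.trans_eq h.symm) q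

end Config

/-- The standing data of the argument: an embedding of a linear configuration that satisfies the
Working Conditions. -/
structure WorkingEmbedding (C : Config) {N : ℕ} (φ : C.V → Fin N → ℤ) : Prop where
  linear : C.IsLinear
  working : C.WorkingConditions
  embedding : C.IsEmbedding N φ

namespace WorkingEmbedding


variable {C : Config} {N : ℕ} {φ : C.V → Fin N → ℤ}

theorem dotProduct_eq (E : WorkingEmbedding C φ) (u v : C.V) :
    φ u ⬝ᵥ φ v = if u = v then C.w u else if C.graph.Adj u v then -1 else 0 :=
  E.embedding u v

theorem dotProduct_self (E : WorkingEmbedding C φ) (u : C.V) :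
    φ u ⬝ᵥ φ u = C.adjw u + C.deg u := by
  rw [E.dotProduct_eq, if_pos rfl, Config.adjw, sub_add_cancel]

theorem dotProduct_adj (E : WorkingEmbedding C φ) {u v : C.V} (h : C.graph.Adj u v) :
    φ u ⬝ᵥ φ v = -1 := by
  rw [E.dotProduct_eq, if_neg h.ne, if_pos h]

theorem dotProduct_not_adj (E : WorkingEmbedding C φ) {u v : C.V} (hne : u ≠ v)
    (h : ¬ C.graph.Adj u v) : φ u ⬝ᵥ φ v = 0 := by
  rw [E.dotProduct_eq, if_neg hne, if_neg h]

theorem dotProduct_cases (E : WorkingEmbedding C φ) {u v : C.V} (h : u ≠ v) :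
    φ u ⬝ᵥ φ v = 0 ∧ ¬ C.graph.Adj u v ∨ φ u ⬝ᵥ φ v = -1 ∧ C.graph.Adj u v := by
  by_cases huv : C.graph.Adj u v
  · exact Or.inr ⟨E.dotProduct_adj huv, huv⟩
  · exact Or.inl ⟨E.dotProduct_not_adj h huv, huv⟩

theorem two_le_dotProduct_self (E : WorkingEmbedding C φ) (u : C.V) : 2 ≤ φ u ⬝ᵥ φ u := by
  rw [E.dotProduct_eq, if_pos rfl]
  exact E.working.1 u

theorem deg_le_two (E : WorkingEmbedding C φ) (u : C.V) : C.deg u ≤ 2 := E.linear.1 u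

theorem adjw_nonneg (E : WorkingEmbedding C φ) (u : C.V) : 0 ≤ C.adjw u := by
  have := E.two_le_dotProduct_self u
  have := E.dotProduct_self u
  have := E.deg_le_two u
  omega

theorem adjw_le_three (E : WorkingEmbedding C φ) (u : C.V) : C.adjw u ≤ 3 := E.working.2.1 u

theorem eq_of_one_lt_adjw (E : WorkingEmbedding C φ) {u v : C.V} (hu : 1 < C.adjw u)
    (hv : 1 < C.adjw v) : u = v :=
  E.working.2.2.1 u v hu hv

theorem false_of_pattern (E : WorkingEmbedding C φ) {l : List C.V} {p : List ℤ}
    (hp : l.map C.adjw = p) (hpf : p ∈ forbiddenPatterns) (h : NonBacktracking C.graph l) :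
    False := by
  refine E.working.2.2.2.2.2.2.1 p hpf (hp ▸ .of_nonBacktracking E.linear.2 ?_ h)
  rintro rfl
  subst hp
  simp [forbiddenPatterns] at hpf

theorem dotProduct_far (E : WorkingEmbedding C φ) {l : List C.V} (h : NonBacktracking C.graph l)
    (i j : ℕ) (hij : i + 2 ≤ j := by decide) (hj : j < l.length := by simp) :
    φ l[i] ⬝ᵥ φ l[j] = 0 :=
  let ⟨hne, hadj⟩ := h.ne_and_not_adj E.linear.2 hij hj
  E.dotProduct_not_adj hne hadj

theorem adjw_eq_zero_of_not_isBad (E : WorkingEmbedding C φ) {p q r : C.V} (hp : ¬ C.IsBad p)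
    (hq : C.graph.Adj p q) (hr : C.graph.Adj p r) (hqr : q ≠ r) (hpos : 0 < C.adjw q) :
    C.adjw r = 0 := by
  by_contra hne
  exact hp ⟨q, r, hqr, hq, hr, hpos, (E.adjw_nonneg r).lt_of_ne' hne⟩

theorem dotProduct_self_bounds (E : WorkingEmbedding C φ) {p q : C.V} (h : C.graph.Adj p q) :
    C.adjw p + 1 ≤ φ p ⬝ᵥ φ p ∧ φ p ⬝ᵥ φ p ≤ C.adjw p + 2 := by
  have := E.dotProduct_self p
  have := E.deg_le_two p
  have := Config.one_le_deg h
  omega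

theorem dotProduct_self_eq_adjw_add_two (E : WorkingEmbedding C φ) {p q r : C.V}
    (hq : C.graph.Adj p q) (hr : C.graph.Adj p r) (hqr : q ≠ r) :
    φ p ⬝ᵥ φ p = C.adjw p + 2 := by
  rw [E.dotProduct_self, Config.deg_eq_two E.linear hq hr hqr, Nat.cast_two]

theorem exists_adj_pair (E : WorkingEmbedding C φ) {p : C.V} (hdeg : C.deg p = 2)
    (hp : ¬ C.IsBad p) :
    ∃ q r, C.graph.Adj p q ∧ C.graph.Adj p r ∧ q ≠ r ∧ C.adjw q = 0 := by
  obtain ⟨q, hq⟩ := Config.exists_adj (hdeg ▸ one_le_two)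
  obtain ⟨r, hr, hrq⟩ := Config.exists_adj_ne hdeg q
  by_cases hq0 : C.adjw q = 0
  · exact ⟨q, r, hq, hr, hrq.symm, hq0⟩
  · exact ⟨r, q, hr, hq, hrq, E.adjw_eq_zero_of_not_isBad hp hq hr hrq.symm
      ((E.adjw_nonneg q).lt_of_ne' hq0)⟩

theorem deg_eq_two_of_adjw_eq_zero (E : WorkingEmbedding C φ) {p : C.V} (hp : C.adjw p = 0) :
    C.deg p = 2 := by
  have := E.two_le_dotProduct_self p
  have := E.dotProduct_self p
  have := E.deg_le_two p
  omega

theorem dotProduct_self_of_adjw_eq_zero (E : WorkingEmbedding C φ) {p : C.V}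
    (hp : C.adjw p = 0) : φ p ⬝ᵥ φ p = 2 := by
  rw [E.dotProduct_self, hp, E.deg_eq_two_of_adjw_eq_zero hp]
  rfl

end WorkingEmbedding

/-- A chain `a, b, x, c, d` whose adjusted weights follow a bad-part pattern in which the non-bad
vertex `x` sits between two bad ones, or, when `c` has adjusted weight `0`, the reverse of such a
pattern. -/
structure BadChain {C : Config} {N : ℕ} (φ : C.V → Fin N → ℤ) (a b x c d : C.V) : Prop extends
    WorkingEmbedding C φ where
  nonBacktracking : NonBacktracking C.graph [a, b, x, c, d]
  adjw_a : C.adjw a = 1 ∨ C.adjw a = 2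
  adjw_b : C.adjw b = 0
  adjw_x : C.adjw x = 1
  adjw_c : C.adjw c = 0 ∨ C.adjw c = 1
  adjw_d : C.adjw d = 1 ∨ C.adjw d = 2
  eq_of_isBad : ∀ p, C.IsBad p → p = b ∨ p = c

/-- `p` is none of the five vertices `a, b, x, c, d` of the bad part. -/
structure Outside {V : Type} (a b x c d p : V) : Prop where
  ne_a : p ≠ a
  ne_b : p ≠ b
  ne_x : p ≠ x
  ne_c : p ≠ c
  ne_d : p ≠ d

theorem Outside.reverse {V : Type} {a b x c d p : V} (h : Outside a b x c d p) :
    Outside d c x b a p :=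
  ⟨h.ne_d, h.ne_c, h.ne_x, h.ne_b, h.ne_a⟩

namespace BadChain

variable {C : Config} {N : ℕ} {φ : C.V → Fin N → ℤ} {a b x c d p q : C.V}

theorem adj_ab (H : BadChain φ a b x c d) : C.graph.Adj a b := H.nonBacktracking.1

theorem adj_bx (H : BadChain φ a b x c d) : C.graph.Adj b x := H.nonBacktracking.tail.1

theorem adj_xc (H : BadChain φ a b x c d) : C.graph.Adj x c := H.nonBacktracking.tail.tail.1

theorem adj_cd (H : BadChain φ a b x c d) : C.graph.Adj c d := H.nonBacktracking.tail.tail.tail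

theorem ne_ax (H : BadChain φ a b x c d) : a ≠ x := H.nonBacktracking.2.1

theorem ne_bc (H : BadChain φ a b x c d) : b ≠ c := H.nonBacktracking.tail.2.1

theorem ne_xd (H : BadChain φ a b x c d) : x ≠ d := H.nonBacktracking.tail.tail.2.1

theorem reverse (H : BadChain φ a b x c d) (hc : C.adjw c = 0) : BadChain φ d c x b a where
  __ := H.toWorkingEmbedding
  nonBacktracking := ⟨H.adj_cd.symm, H.ne_xd.symm, H.adj_xc.symm, H.ne_bc.symm, H.adj_bx.symm,
    H.ne_ax.symm, H.adj_ab.symm⟩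
  adjw_a := H.adjw_d
  adjw_b := hc
  adjw_x := H.adjw_x
  adjw_c := Or.inl H.adjw_b
  adjw_d := H.adjw_a
  eq_of_isBad := fun p hp => (H.eq_of_isBad p hp).symm

theorem dotProduct_bb (H : BadChain φ a b x c d) : φ b ⬝ᵥ φ b = 2 := by
  rw [H.dotProduct_self_eq_adjw_add_two H.adj_ab.symm H.adj_bx H.ne_ax, H.adjw_b, zero_add]

theorem dotProduct_xx (H : BadChain φ a b x c d) : φ x ⬝ᵥ φ x = 3 := by
  rw [H.dotProduct_self_eq_adjw_add_two H.adj_bx.symm H.adj_xc H.ne_bc, H.adjw_x]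
  rfl

theorem dotProduct_cc (H : BadChain φ a b x c d) : φ c ⬝ᵥ φ c = C.adjw c + 2 :=
  H.dotProduct_self_eq_adjw_add_two H.adj_xc.symm H.adj_cd H.ne_xd

theorem dotProduct_ax (H : BadChain φ a b x c d) : φ a ⬝ᵥ φ x = 0 :=
  H.dotProduct_far H.nonBacktracking 0 2

theorem dotProduct_ac (H : BadChain φ a b x c d) : φ a ⬝ᵥ φ c = 0 :=
  H.dotProduct_far H.nonBacktracking 0 3

theorem dotProduct_ad (H : BadChain φ a b x c d) : φ a ⬝ᵥ φ d = 0 :=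
  H.dotProduct_far H.nonBacktracking 0 4

theorem dotProduct_bc (H : BadChain φ a b x c d) : φ b ⬝ᵥ φ c = 0 :=
  H.dotProduct_far H.nonBacktracking 1 3

theorem dotProduct_bd (H : BadChain φ a b x c d) : φ b ⬝ᵥ φ d = 0 :=
  H.dotProduct_far H.nonBacktracking 1 4

theorem dotProduct_xd (H : BadChain φ a b x c d) : φ x ⬝ᵥ φ d = 0 :=
  H.dotProduct_far H.nonBacktracking 2 4

theorem dotProduct_b_outside (H : BadChain φ a b x c d) (hp : Outside a b x c d p) :
    φ b ⬝ᵥ φ p = 0 :=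
  H.dotProduct_not_adj hp.ne_b.symm fun h =>
    (Config.eq_or_eq_of_adj H.linear H.adj_ab.symm H.adj_bx H.ne_ax h).elim hp.ne_a hp.ne_x

theorem dotProduct_x_outside (H : BadChain φ a b x c d) (hp : Outside a b x c d p) :
    φ x ⬝ᵥ φ p = 0 :=
  H.dotProduct_not_adj hp.ne_x.symm fun h =>
    (Config.eq_or_eq_of_adj H.linear H.adj_bx.symm H.adj_xc H.ne_bc h).elim hp.ne_b hp.ne_c

theorem dotProduct_c_outside (H : BadChain φ a b x c d) (hp : Outside a b x c d p) :
    φ c ⬝ᵥ φ p = 0 :=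
  H.dotProduct_not_adj hp.ne_c.symm fun h =>
    (Config.eq_or_eq_of_adj H.linear H.adj_xc.symm H.adj_cd H.ne_xd h).elim hp.ne_x hp.ne_d

theorem not_isBad_outside (H : BadChain φ a b x c d) (hp : Outside a b x c d p) : ¬ C.IsBad p :=
  fun h => (H.eq_of_isBad p h).elim hp.ne_b hp.ne_c

theorem not_isBad_d (H : BadChain φ a b x c d) : ¬ C.IsBad d := fun h =>
  (H.eq_of_isBad d h).elim
    (H.nonBacktracking.ne_and_not_adj H.linear.2 (i := 1) (j := 4) (by decide) (by simp)).1.symm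
    H.adj_cd.ne'

theorem outside_of_adj (H : BadChain φ a b x c d) (hp : Outside a b x c d p)
    (hpq : C.graph.Adj p q) (ha : q ≠ a) (hd : q ≠ d) : Outside a b x c d q := by
  have hqp := H.dotProduct_adj hpq.symm
  refine ⟨ha, ?_, ?_, ?_, hd⟩ <;> rintro rfl
  · exact absurd (H.dotProduct_b_outside hp) (by omega)
  · exact absurd (H.dotProduct_x_outside hp) (by omega)
  · exact absurd (H.dotProduct_c_outside hp) (by omega)

theorem nonBacktracking_cons (H : BadChain φ a b x c d) (h : C.graph.Adj a p) (hp : p ≠ b) :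
    NonBacktracking C.graph [p, a, b, x, c, d] :=
  ⟨h.symm, hp, H.nonBacktracking⟩

theorem outside_of_adj_a (H : BadChain φ a b x c d) (h : C.graph.Adj a p) (hp : p ≠ b) :
    Outside a b x c d p := by
  have hfar {y : C.V} := (H.nonBacktracking_cons h hp).ne_and_not_adj_of_mem H.linear.2 (y := y)
  exact ⟨h.ne', hp, (hfar (by simp)).1, (hfar (by simp)).1, (hfar (by simp)).1⟩

end BadChain

/-- Orthonormal vectors in terms of which `φ x = e₁ + e₂ + e₃` and `φ b = f - e₁`; the list `L`
holds the further vectors needed to write down `φ c`. -/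
structure Frame {V : Type} {N : ℕ} (φ : V → Fin N → ℤ) (b x : V) (e₁ e₂ e₃ f : Fin N → ℤ)
    (L : List (Fin N → ℤ)) : Prop where
  orthonormal : IsOrthonormal (L ++ [f, e₁, e₂, e₃])
  x_eq : φ x = e₁ + e₂ + e₃
  b_eq : φ b = f - e₁

namespace Frame

variable {V : Type} {N : ℕ} {φ : V → Fin N → ℤ} {b x : V} {e₁ e₂ e₃ f : Fin N → ℤ}
  {L : List (Fin N → ℤ)}

theorem swap (F : Frame φ b x e₁ e₂ e₃ f L) : Frame φ b x e₁ e₃ e₂ f L :=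
  ⟨F.orthonormal.perm (.append_left _ (.cons _ (.cons _ (.swap _ _ _)))),
    by rw [F.x_eq, add_right_comm], F.b_eq⟩

theorem x_dotProduct (F : Frame φ b x e₁ e₂ e₃ f L) (p : Fin N → ℤ) :
    φ x ⬝ᵥ p = e₁ ⬝ᵥ p + e₂ ⬝ᵥ p + e₃ ⬝ᵥ p := by
  rw [F.x_eq, add_dotProduct, add_dotProduct]

theorem b_dotProduct (F : Frame φ b x e₁ e₂ e₃ f L) (p : Fin N → ℤ) :
    φ b ⬝ᵥ p = f ⬝ᵥ p - e₁ ⬝ᵥ p := by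
  rw [F.b_eq, sub_dotProduct]

theorem exists_dotProduct_ne_zero (F : Frame φ b x e₁ e₂ e₃ f L) {u : Fin N → ℤ} {i : Fin N}
    (hx : φ x i ≠ 0) (hu : u i ≠ 0) : e₁ ⬝ᵥ u ≠ 0 ∨ e₂ ⬝ᵥ u ≠ 0 ∨ e₃ ⬝ᵥ u ≠ 0 := by
  have hzero (e) (he : e ∈ L ++ [f, e₁, e₂, e₃]) (h : e ⬝ᵥ u = 0) : e i = 0 := by
    by_contra hi
    exact hu (eq_zero_of_unit_dotProduct_eq_zero (F.orthonormal.1 e he) h hi)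
  by_contra! h
  refine hx ?_
  rw [F.x_eq, Pi.add_apply, Pi.add_apply, hzero e₁ (by simp) h.1, hzero e₂ (by simp) h.2.1,
    hzero e₃ (by simp) h.2.2]
  rfl

end Frame

theorem coordinates_of_sum_eq_neg_one {p q r : ℤ} (hsum : p + q + r = -1)
    (hsq : p * p + q * q + r * r ≤ 2) :
    p = -1 ∧ q = 0 ∧ r = 0 ∨ q = -1 ∧ p = 0 ∧ r = 0 ∨ r = -1 ∧ q = 0 ∧ p = 0 := by
  have hq := mul_self_nonneg q
  have hr := mul_self_nonneg r
  rcases eq_neg_one_or_zero_or_one (by omega : p * p ≤ 3) with rfl | rfl | rfl <;>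
    rcases eq_neg_one_or_zero_or_one (by omega : q * q ≤ 3) with rfl | rfl | rfl <;>
    obtain rfl := eq_sub_of_add_eq' hsum <;> omega

theorem coordinates_of_sum_eq_neg_one_of_double {p q r : ℤ} (hsum : p + q + r = -1)
    (hsq : 2 * (p * p) + q * q + r * r ≤ 3) :
    p = -1 ∧ q = 0 ∧ r = 0 ∨ q = -1 ∧ p = 0 ∧ r = 0 ∨ r = -1 ∧ q = 0 ∧ p = 0 := by
  have hp := mul_self_nonneg p
  have hr := mul_self_nonneg r
  rcases eq_neg_one_or_zero_or_one (by omega : q * q ≤ 3) with rfl | rfl | rfl <;>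
    rcases eq_neg_one_or_zero_or_one (by omega : r * r ≤ 3) with rfl | rfl | rfl <;>
    obtain rfl : p = _ := eq_sub_of_add_eq (eq_sub_of_add_eq hsum) <;> omega

namespace BadChain

variable {C : Config} {N : ℕ} {φ : C.V → Fin N → ℤ} {a b x c d p : C.V}

theorem exists_frame (H : BadChain φ a b x c d) :
    ∃ e₁ e₂ e₃ f, Frame φ b x e₁ e₂ e₃ f [] := by
  obtain ⟨e, e', e'', he, hx⟩ := exists_orthonormal_triple H.dotProduct_xx
  have hbb := H.dotProduct_bb
  have hxb : e ⬝ᵥ φ b + e' ⬝ᵥ φ b + e'' ⬝ᵥ φ b = -1 := by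
    rw [← H.dotProduct_adj H.adj_bx.symm, hx, add_dotProduct, add_dotProduct]
  have hbessel := he.sum_sq_le (φ b)
  simp only [List.map_cons, List.map_nil, List.sum_cons, List.sum_nil] at hbessel
  obtain ⟨e₁, e₂, e₃, he, hx, h₁, h₂, h₃⟩ : ∃ e₁ e₂ e₃, IsOrthonormal [e₁, e₂, e₃] ∧
      φ x = e₁ + e₂ + e₃ ∧ e₁ ⬝ᵥ φ b = -1 ∧ e₂ ⬝ᵥ φ b = 0 ∧ e₃ ⬝ᵥ φ b = 0 := by
    rcases coordinates_of_sum_eq_neg_one hxb (by omega) with h | h | h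
    · exact ⟨e, e', e'', he, hx, h⟩
    · exact ⟨e', e, e'', he.perm (.swap _ _ _), by rw [hx]; abel, h⟩
    · exact ⟨e'', e', e, he.perm (List.reverse_perm [e'', e', e]), by rw [hx]; abel, h⟩
  refine ⟨e₁, e₂, e₃, residual [e₁, e₂, e₃] (φ b), he.residual_cons ?_, hx, ?_⟩ <;>
    simp [residual, h₁, h₂, h₃, hbb]

theorem frame_dotProduct_c (H : BadChain φ a b x c d) {e₁ e₂ e₃ f : Fin N → ℤ}
    (F : Frame φ b x e₁ e₂ e₃ f []) : f ⬝ᵥ φ c = e₁ ⬝ᵥ φ c ∧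
    (e₁ ⬝ᵥ φ c = -1 ∧ e₂ ⬝ᵥ φ c = 0 ∧ e₃ ⬝ᵥ φ c = 0 ∨
      e₂ ⬝ᵥ φ c = -1 ∧ e₁ ⬝ᵥ φ c = 0 ∧ e₃ ⬝ᵥ φ c = 0 ∨
      e₃ ⬝ᵥ φ c = -1 ∧ e₂ ⬝ᵥ φ c = 0 ∧ e₁ ⬝ᵥ φ c = 0) := by
  have hbc : f ⬝ᵥ φ c = e₁ ⬝ᵥ φ c := by rw [← sub_eq_zero, ← F.b_dotProduct, H.dotProduct_bc]
  have hxc := F.x_dotProduct (φ c)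
  rw [H.dotProduct_adj H.adj_xc] at hxc
  have hbessel := F.orthonormal.sum_sq_le (φ c)
  simp only [List.nil_append, List.map_cons, List.map_nil, List.sum_cons, List.sum_nil,
    H.dotProduct_cc, hbc] at hbessel
  have := H.adjw_c
  exact ⟨hbc, coordinates_of_sum_eq_neg_one_of_double hxc.symm (by omega)⟩

-- If `φ c = -f - e₁` then `φ a ⬝ᵥ φ c = 1 - 2 * (e₁ ⬝ᵥ φ a)` is odd.
theorem adjw_c_eq_one_of_overlap (H : BadChain φ a b x c d) {e₁ e₂ e₃ f : Fin N → ℤ}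
    (F : Frame φ b x e₁ e₂ e₃ f []) (h₁ : e₁ ⬝ᵥ φ c = -1) (h₂ : e₂ ⬝ᵥ φ c = 0)
    (h₃ : e₃ ⬝ᵥ φ c = 0) (hf : f ⬝ᵥ φ c = -1) : C.adjw c = 1 := by
  refine H.adjw_c.resolve_left fun hc => ?_
  have hca := F.orthonormal.dotProduct_eq_sum (p := φ c) (by simp [H.dotProduct_cc, *]) (φ a)
  have hba := F.b_dotProduct (φ a)
  rw [H.dotProduct_adj H.adj_ab.symm] at hba
  simp only [List.nil_append, List.map_cons, List.map_nil, List.sum_cons, List.sum_nil,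
    dotProduct_comm (φ c) (φ a), H.dotProduct_ac, h₁, h₂, h₃, hf] at hca
  omega

theorem exists_frame_c (H : BadChain φ a b x c d) : ∃ e₁ e₂ e₃ f,
    (C.adjw c = 0 ∧ ∃ g, Frame φ b x e₁ e₂ e₃ f [g] ∧ φ c = g - e₂) ∨
    (C.adjw c = 1 ∧ ∃ g h, Frame φ b x e₁ e₂ e₃ f [g, h] ∧ φ c = g + h - e₂) ∨
    (C.adjw c = 1 ∧ ∃ h, Frame φ b x e₁ e₂ e₃ f [h] ∧ φ c = h - f - e₁) := by
  obtain ⟨e₁, e₂, e₃, f, F⟩ := H.exists_frame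
  obtain ⟨hf, hoverlap | hc⟩ := H.frame_dotProduct_c F
  · obtain ⟨h₁, h₂, h₃⟩ := hoverlap
    have hc := H.adjw_c_eq_one_of_overlap F h₁ h₂ h₃ (by omega)
    refine ⟨e₁, e₂, e₃, f, Or.inr (Or.inr ⟨hc, residual [f, e₁, e₂, e₃] (φ c),
      ⟨F.orthonormal.residual_cons ?_, F.x_eq, F.b_eq⟩, ?_⟩)⟩
    · simp [H.dotProduct_cc, *]
    · simp [residual, *]
      abel
  obtain ⟨e₂, e₃, F, h₂, h₁, h₃⟩ : ∃ e₂ e₃, Frame φ b x e₁ e₂ e₃ f [] ∧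
      e₂ ⬝ᵥ φ c = -1 ∧ e₁ ⬝ᵥ φ c = 0 ∧ e₃ ⬝ᵥ φ c = 0 := by
    rcases hc with h | ⟨h₃, h₂, h₁⟩
    · exact ⟨e₂, e₃, F, h⟩
    · exact ⟨e₃, e₂, F.swap, h₃, h₁, h₂⟩
  rcases H.adjw_c with hc | hc
  · refine ⟨e₁, e₂, e₃, f, Or.inl ⟨hc, residual [f, e₁, e₂, e₃] (φ c),
      ⟨F.orthonormal.residual_cons ?_, F.x_eq, F.b_eq⟩, ?_⟩⟩ <;>
      simp [residual, H.dotProduct_cc, *]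
  · obtain ⟨g, h, hgh, hres⟩ := F.orthonormal.exists_residual_eq_add (u := φ c)
      (by simp [H.dotProduct_cc, *])
    refine ⟨e₁, e₂, e₃, f, Or.inr (Or.inl ⟨hc, g, h, ⟨hgh, F.x_eq, F.b_eq⟩, ?_⟩)⟩
    rw [← hres]
    simp [residual, *]

theorem isBad_c (H : BadChain φ a b x c d) : C.IsBad c :=
  ⟨x, d, H.ne_xd, H.adj_xc.symm, H.adj_cd, by rw [H.adjw_x]; decide,
    by have := H.adjw_d; omega⟩

theorem adjw_le_one (H : BadChain φ a b x c d) (hc : C.adjw c = 1) (hp : p ≠ d) :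
    C.adjw p ≤ 1 := by
  by_contra! h
  have hadj := H.working.2.2.2.1 p c h H.isBad_c hc
  rcases Config.eq_or_eq_of_adj H.linear H.adj_xc.symm H.adj_cd H.ne_xd hadj with rfl | rfl
  · exact absurd H.adjw_x h.ne'
  · exact hp rfl

theorem ne_ad (H : BadChain φ a b x c d) : a ≠ d :=
  (H.nonBacktracking.ne_and_not_adj H.linear.2 (i := 0) (j := 4) (by decide) (by simp)).1

theorem dotProduct_self_le_three (H : BadChain φ a b x c d) (hc : C.adjw c = 1) (hp : p ≠ d) :
    φ p ⬝ᵥ φ p ≤ 3 := by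
  have := H.adjw_le_one hc hp
  have := H.deg_le_two p
  have := H.dotProduct_self p
  omega

theorem not_adj_d_of_adj_a (H : BadChain φ a b x c d) (h : C.graph.Adj a p) (hp : p ≠ b) :
    ¬ C.graph.Adj p d :=
  ((H.nonBacktracking_cons h hp).ne_and_not_adj_of_mem H.linear.2 (by simp)).2

theorem not_adj_d_of_adjw_c_pos (H : BadChain φ a b x c d) (hc : 0 < C.adjw c) (hpc : p ≠ c)
    (hp : 0 < C.adjw p) : ¬ C.graph.Adj p d := fun h =>
  H.not_isBad_d ⟨c, p, hpc.symm, H.adj_cd.symm, h.symm, hc, hp⟩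

end BadChain

/-- A bad chain with `C.adjw c = 1` in which `φ b` and `φ c` have disjoint supports. -/
structure DisjointChain {C : Config} {N : ℕ} (φ : C.V → Fin N → ℤ) (a b x c d : C.V)
    (e₁ e₂ e₃ f g h : Fin N → ℤ) : Prop extends BadChain φ a b x c d where
  adjw_c_eq : C.adjw c = 1
  frame : Frame φ b x e₁ e₂ e₃ f [g, h]
  c_eq : φ c = g + h - e₂

theorem disjoint_coordinates_outside {p q r : ℤ}
    (h : r * r + (q - r) * (q - r) + p * p + p * p + q * q + (p + q) * (p + q) ≤ 3) :
    (p = 0 ∧ q = 0) ∨ ((p = 1 ∨ p = -1) ∧ q = 0 ∧ r = 0) ∨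
      (p = 0 ∧ (q = 1 ∨ q = -1) ∧ (r = q ∨ r = 0)) := by
  have := mul_self_nonneg r
  have := mul_self_nonneg (q - r)
  have := mul_self_nonneg p
  have := mul_self_nonneg q
  have := mul_self_nonneg (p + q)
  rcases eq_neg_one_or_zero_or_one (by omega : p * p ≤ 3) with rfl | rfl | rfl <;>
    rcases eq_neg_one_or_zero_or_one (by omega : q * q ≤ 3) with rfl | rfl | rfl <;>
    rcases eq_neg_one_or_zero_or_one (by omega : r * r ≤ 3) with rfl | rfl | rfl <;> omega

namespace DisjointChain

variable {C : Config} {N : ℕ} {φ : C.V → Fin N → ℤ} {a b x c d : C.V}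
  {e₁ e₂ e₃ f g h : Fin N → ℤ} {u v : C.V}

theorem swap (D : DisjointChain φ a b x c d e₁ e₂ e₃ f g h) :
    DisjointChain φ a b x c d e₁ e₂ e₃ f h g where
  __ := D
  frame := ⟨D.frame.orthonormal.perm (.swap _ _ _), D.frame.x_eq, D.frame.b_eq⟩
  c_eq := by rw [D.c_eq, add_comm g h]

theorem c_dotProduct (D : DisjointChain φ a b x c d e₁ e₂ e₃ f g h) (p : Fin N → ℤ) :
    φ c ⬝ᵥ p = g ⬝ᵥ p + h ⬝ᵥ p - e₂ ⬝ᵥ p := by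
  rw [D.c_eq, sub_dotProduct, add_dotProduct]

theorem bessel (D : DisjointChain φ a b x c d e₁ e₂ e₃ f g h) (p : Fin N → ℤ) :
    (g ⬝ᵥ p) * (g ⬝ᵥ p) + (h ⬝ᵥ p) * (h ⬝ᵥ p) + (f ⬝ᵥ p) * (f ⬝ᵥ p) + (e₁ ⬝ᵥ p) * (e₁ ⬝ᵥ p) +
      (e₂ ⬝ᵥ p) * (e₂ ⬝ᵥ p) + (e₃ ⬝ᵥ p) * (e₃ ⬝ᵥ p) ≤ p ⬝ᵥ p := by
  simpa [add_assoc] using D.frame.orthonormal.sum_sq_le p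

theorem dotProduct_eq_of_norm (D : DisjointChain φ a b x c d e₁ e₂ e₃ f g h) {p : Fin N → ℤ}
    (hp : p ⬝ᵥ p ≤ (g ⬝ᵥ p) * (g ⬝ᵥ p) + (h ⬝ᵥ p) * (h ⬝ᵥ p) + (f ⬝ᵥ p) * (f ⬝ᵥ p) +
      (e₁ ⬝ᵥ p) * (e₁ ⬝ᵥ p) + (e₂ ⬝ᵥ p) * (e₂ ⬝ᵥ p) + (e₃ ⬝ᵥ p) * (e₃ ⬝ᵥ p)) (q : Fin N → ℤ) :
    p ⬝ᵥ q = (g ⬝ᵥ p) * (g ⬝ᵥ q) + (h ⬝ᵥ p) * (h ⬝ᵥ q) + (f ⬝ᵥ p) * (f ⬝ᵥ q) +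
      (e₁ ⬝ᵥ p) * (e₁ ⬝ᵥ q) + (e₂ ⬝ᵥ p) * (e₂ ⬝ᵥ q) + (e₃ ⬝ᵥ p) * (e₃ ⬝ᵥ q) := by
  have hsum := D.frame.orthonormal.dotProduct_eq_sum (p := p)
    (by simpa [add_assoc] using le_antisymm hp (D.bessel p)) q
  simpa [add_assoc] using hsum

theorem relations_outside (D : DisjointChain φ a b x c d e₁ e₂ e₃ f g h)
    (hu : Outside a b x c d u) : f ⬝ᵥ φ u = e₁ ⬝ᵥ φ u ∧
      e₃ ⬝ᵥ φ u = -(e₁ ⬝ᵥ φ u + e₂ ⬝ᵥ φ u) ∧ h ⬝ᵥ φ u = e₂ ⬝ᵥ φ u - g ⬝ᵥ φ u := by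
  have := D.frame.b_dotProduct (φ u) ▸ D.dotProduct_b_outside hu
  have := D.frame.x_dotProduct (φ u) ▸ D.dotProduct_x_outside hu
  have := D.c_dotProduct (φ u) ▸ D.dotProduct_c_outside hu
  omega

theorem relations_a (D : DisjointChain φ a b x c d e₁ e₂ e₃ f g h) :
    f ⬝ᵥ φ a = e₁ ⬝ᵥ φ a - 1 ∧ e₃ ⬝ᵥ φ a = -(e₁ ⬝ᵥ φ a + e₂ ⬝ᵥ φ a) ∧
      h ⬝ᵥ φ a = e₂ ⬝ᵥ φ a - g ⬝ᵥ φ a := by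
  have := D.frame.b_dotProduct (φ a) ▸ D.dotProduct_adj D.adj_ab.symm
  have := D.frame.x_dotProduct (φ a) ▸ dotProduct_comm (φ a) (φ x) ▸ D.dotProduct_ax
  have := D.c_dotProduct (φ a) ▸ dotProduct_comm (φ a) (φ c) ▸ D.dotProduct_ac
  omega

theorem relations_d (D : DisjointChain φ a b x c d e₁ e₂ e₃ f g h) :
    f ⬝ᵥ φ d = e₁ ⬝ᵥ φ d ∧ e₃ ⬝ᵥ φ d = -(e₁ ⬝ᵥ φ d + e₂ ⬝ᵥ φ d) ∧
      h ⬝ᵥ φ d = e₂ ⬝ᵥ φ d - 1 - g ⬝ᵥ φ d := by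
  have := D.frame.b_dotProduct (φ d) ▸ D.dotProduct_bd
  have := D.frame.x_dotProduct (φ d) ▸ D.dotProduct_xd
  have := D.c_dotProduct (φ d) ▸ D.dotProduct_adj D.adj_cd
  omega

theorem coordinates_outside (D : DisjointChain φ a b x c d e₁ e₂ e₃ f g h)
    (hu : Outside a b x c d u) : (e₁ ⬝ᵥ φ u = 0 ∧ e₂ ⬝ᵥ φ u = 0) ∨
      ((e₁ ⬝ᵥ φ u = 1 ∨ e₁ ⬝ᵥ φ u = -1) ∧ e₂ ⬝ᵥ φ u = 0 ∧ g ⬝ᵥ φ u = 0) ∨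
      (e₁ ⬝ᵥ φ u = 0 ∧ (e₂ ⬝ᵥ φ u = 1 ∨ e₂ ⬝ᵥ φ u = -1) ∧
        (g ⬝ᵥ φ u = e₂ ⬝ᵥ φ u ∨ g ⬝ᵥ φ u = 0)) := by
  obtain ⟨hf, h₃, hh⟩ := D.relations_outside hu
  have hbessel := D.bessel (φ u)
  rw [hf, h₃, hh, neg_mul_neg] at hbessel
  exact disjoint_coordinates_outside
    (hbessel.trans (D.dotProduct_self_le_three D.adjw_c_eq hu.ne_d))

theorem dotProduct_self_eq_three (D : DisjointChain φ a b x c d e₁ e₂ e₃ f g h)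
    (hu : Outside a b x c d u) (hne : e₁ ⬝ᵥ φ u ≠ 0 ∨ e₂ ⬝ᵥ φ u ≠ 0) : φ u ⬝ᵥ φ u = 3 := by
  obtain ⟨hf, h₃, hh⟩ := D.relations_outside hu
  have hbessel := D.bessel (φ u)
  have hle := D.dotProduct_self_le_three D.adjw_c_eq hu.ne_d
  rw [hf, h₃, hh] at hbessel
  rcases D.coordinates_outside hu with ⟨h₁, h₂⟩ | ⟨h₁ | h₁, h₂, hg⟩ | ⟨h₁, h₂ | h₂, hg | hg⟩
  · omega
  all_goals simp only [h₁, h₂, hg] at hbessel; omega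

theorem deg_eq_two_and_adjw_eq_one (D : DisjointChain φ a b x c d e₁ e₂ e₃ f g h)
    (hu : Outside a b x c d u) (hne : e₁ ⬝ᵥ φ u ≠ 0 ∨ e₂ ⬝ᵥ φ u ≠ 0) :
    C.deg u = 2 ∧ C.adjw u = 1 := by
  have := D.dotProduct_self_eq_three hu hne
  have := D.dotProduct_self u
  have := D.adjw_le_one D.adjw_c_eq hu.ne_d
  have := D.deg_le_two u
  omega

theorem dotProduct_of_e₁_ne_zero (D : DisjointChain φ a b x c d e₁ e₂ e₃ f g h)
    (hv : Outside a b x c d v) (h₁ : e₁ ⬝ᵥ φ v ≠ 0) :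
    ∃ s : ℤ, (s = 1 ∨ s = -1) ∧
      ∀ q, φ v ⬝ᵥ q = s * (e₁ ⬝ᵥ q - e₃ ⬝ᵥ q + f ⬝ᵥ q) := by
  obtain ⟨hs, h₂, hg⟩ : (e₁ ⬝ᵥ φ v = 1 ∨ e₁ ⬝ᵥ φ v = -1) ∧ e₂ ⬝ᵥ φ v = 0 ∧ g ⬝ᵥ φ v = 0 := by
    rcases D.coordinates_outside hv with ⟨h, -⟩ | h | ⟨h, -⟩
    exacts [absurd h h₁, h, absurd h h₁]
  obtain ⟨hf, h₃, hh⟩ := D.relations_outside hv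
  refine ⟨e₁ ⬝ᵥ φ v, hs, fun q => ?_⟩
  rw [D.dotProduct_eq_of_norm (p := φ v) (by
    rw [D.dotProduct_self_eq_three hv (Or.inl h₁), hf, h₃, hh, h₂, hg]
    rcases hs with hs | hs <;> simp [hs]), hf, h₃, hh, h₂, hg]
  ring

theorem dotProduct_of_e₂_ne_zero (D : DisjointChain φ a b x c d e₁ e₂ e₃ f g h)
    (hv : Outside a b x c d v) (h₂ : e₂ ⬝ᵥ φ v ≠ 0) (hg : g ⬝ᵥ φ v ≠ 0) :
    ∃ s : ℤ, (s = 1 ∨ s = -1) ∧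
      ∀ q, φ v ⬝ᵥ q = s * (e₂ ⬝ᵥ q - e₃ ⬝ᵥ q + g ⬝ᵥ q) := by
  obtain ⟨h₁, hs, hg⟩ : e₁ ⬝ᵥ φ v = 0 ∧ (e₂ ⬝ᵥ φ v = 1 ∨ e₂ ⬝ᵥ φ v = -1) ∧
      g ⬝ᵥ φ v = e₂ ⬝ᵥ φ v := by
    rcases D.coordinates_outside hv with ⟨-, h⟩ | ⟨-, h, -⟩ | ⟨h₁, hs, h⟩
    exacts [absurd h h₂, absurd h h₂, ⟨h₁, hs, h.resolve_right hg⟩]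
  obtain ⟨hf, h₃, hh⟩ := D.relations_outside hv
  refine ⟨e₂ ⬝ᵥ φ v, hs, fun q => ?_⟩
  rw [D.dotProduct_eq_of_norm (p := φ v) (by
    rw [D.dotProduct_self_eq_three hv (Or.inr h₂), hf, h₃, hh, h₁, hg]
    rcases hs with hs | hs <;> simp [hs]), hf, h₃, hh, h₁, hg]
  ring

theorem coordinates_a_ne (D : DisjointChain φ a b x c d e₁ e₂ e₃ f g h) :
    e₁ ⬝ᵥ φ a - e₃ ⬝ᵥ φ a + f ⬝ᵥ φ a ≠ 0 := by
  obtain ⟨hf, h₃, hh⟩ := D.relations_a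
  have hbessel := (D.bessel (φ a)).trans (D.dotProduct_self_le_three D.adjw_c_eq D.ne_ad)
  rw [hf, h₃, hh] at hbessel
  rw [hf, h₃]
  intro h
  obtain hq : e₂ ⬝ᵥ φ a = 1 - 3 * (e₁ ⬝ᵥ φ a) := by omega
  rw [hq] at hbessel
  obtain ⟨h₁, hg⟩ : (e₁ ⬝ᵥ φ a) * (e₁ ⬝ᵥ φ a) ≤ 3 ∧ (g ⬝ᵥ φ a) * (g ⬝ᵥ φ a) ≤ 3 := by
    constructor <;> nlinarith only [hbessel]
  rcases eq_neg_one_or_zero_or_one h₁ with h₁ | h₁ | h₁ <;>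
    rcases eq_neg_one_or_zero_or_one hg with hg | hg | hg <;> simp [h₁, hg] at hbessel

theorem e₁_dotProduct_eq_zero (D : DisjointChain φ a b x c d e₁ e₂ e₃ f g h)
    (hv : Outside a b x c d v) : e₁ ⬝ᵥ φ v = 0 := by
  by_contra h₁
  obtain ⟨s, hs, hdot⟩ := D.dotProduct_of_e₁_ne_zero hv h₁
  have hva : C.graph.Adj v a := by
    refine ((D.dotProduct_cases hv.ne_a).resolve_left fun h => ?_).2
    rw [hdot] at h
    exact (mul_ne_zero (by omega) D.coordinates_a_ne) h.1
  obtain ⟨u, hvu, hua⟩ := Config.exists_adj_ne (D.deg_eq_two_and_adjw_eq_one hv (Or.inl h₁)).1 a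
  have hu : Outside a b x c d u := D.outside_of_adj hv hvu hua fun hud =>
    D.not_adj_d_of_adj_a hva.symm hv.ne_b (hud ▸ hvu)
  obtain ⟨hf, h₃, -⟩ := D.relations_outside hu
  have hu0 : e₁ ⬝ᵥ φ u ≠ 0 ∨ e₂ ⬝ᵥ φ u ≠ 0 := by
    by_contra! h
    have huv := D.dotProduct_adj hvu
    rw [hdot, hf, h₃, h.1, h.2] at huv
    simp at huv
  have hu1 := (D.deg_eq_two_and_adjw_eq_one hu hu0).2
  have ha := D.adjw_eq_zero_of_not_isBad (D.not_isBad_outside hv) hvu hva hua (by omega)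
  have := D.adjw_a
  omega

theorem coordinates_of_adj (D : DisjointChain φ a b x c d e₁ e₂ e₃ f g h)
    (hu : Outside a b x c d u) {s : ℤ} (hs : s = 1 ∨ s = -1)
    (huv : s * (e₂ ⬝ᵥ φ u - e₃ ⬝ᵥ φ u + g ⬝ᵥ φ u) = -1) :
    f ⬝ᵥ φ u = 0 ∧ e₁ ⬝ᵥ φ u = 0 ∧ e₂ ⬝ᵥ φ u = 0 ∧ e₃ ⬝ᵥ φ u = 0 ∧ g ⬝ᵥ φ u = -s ∧
      h ⬝ᵥ φ u = s := by
  obtain ⟨hf, h₃, hh⟩ := D.relations_outside hu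
  have h₁ := D.e₁_dotProduct_eq_zero hu
  rw [h₃] at huv
  rcases D.coordinates_outside hu with ⟨-, h⟩ | ⟨h, -⟩ | ⟨-, -, hg⟩ <;>
    rcases hs with rfl | rfl <;> omega

theorem dotProduct_eq_sub_of_adj (D : DisjointChain φ a b x c d e₁ e₂ e₃ f g h)
    (hu : Outside a b x c d u) (huw : C.adjw u = 0) {s : ℤ} (hs : s = 1 ∨ s = -1)
    (huv : s * (e₂ ⬝ᵥ φ u - e₃ ⬝ᵥ φ u + g ⬝ᵥ φ u) = -1) (q : Fin N → ℤ) :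
    φ u ⬝ᵥ q = s * (h ⬝ᵥ q - g ⬝ᵥ q) := by
  obtain ⟨hf, h₁, h₂, h₃, hg, hh⟩ := D.coordinates_of_adj hu hs huv
  have := D.dotProduct_self u
  have := D.deg_le_two u
  rw [D.dotProduct_eq_of_norm (p := φ u) (by
    rw [hf, h₁, h₂, h₃, hg, hh]
    rcases hs with rfl | rfl <;> simp <;> omega), hf, h₁, h₂, h₃, hg, hh]
  ring

theorem coordinates_d_ne (D : DisjointChain φ a b x c d e₁ e₂ e₃ f g h)
    (hgh : h ⬝ᵥ φ d - g ⬝ᵥ φ d = 0) : e₂ ⬝ᵥ φ d - e₃ ⬝ᵥ φ d + g ⬝ᵥ φ d ≠ 0 := by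
  obtain ⟨hf, h₃, hh⟩ := D.relations_d
  have hbessel := (D.bessel (φ d)).trans (D.dotProduct_self_bounds D.adj_cd.symm).2
  rw [hf] at hbessel
  have := D.adjw_d
  have := mul_self_nonneg (g ⬝ᵥ φ d)
  have := mul_self_nonneg (h ⬝ᵥ φ d)
  have := mul_self_nonneg (e₂ ⬝ᵥ φ d)
  have := mul_self_nonneg (e₃ ⬝ᵥ φ d)
  rcases eq_neg_one_or_zero_or_one (by omega : (e₁ ⬝ᵥ φ d) * (e₁ ⬝ᵥ φ d) ≤ 3) with h₁ | h₁ | h₁ <;>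
    omega

theorem not_adj_a_of_e₂_ne_zero (D : DisjointChain φ a b x c d e₁ e₂ e₃ f g h)
    (hv : Outside a b x c d v) (h₂ : e₂ ⬝ᵥ φ v ≠ 0) (hg : g ⬝ᵥ φ v ≠ 0) :
    ¬ C.graph.Adj v a := by
  intro hva
  obtain ⟨s, hs, hdot⟩ := D.dotProduct_of_e₂_ne_zero hv h₂ hg
  obtain ⟨u, hvu, hua⟩ := Config.exists_adj_ne (D.deg_eq_two_and_adjw_eq_one hv (Or.inr h₂)).1 a
  have hvd := D.not_adj_d_of_adj_a hva.symm hv.ne_b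
  have hu : Outside a b x c d u := D.outside_of_adj hv hvu hua fun hud => hvd (hud ▸ hvu)
  have huw : C.adjw u = 0 := D.adjw_eq_zero_of_not_isBad (D.not_isBad_outside hv) hva hvu hua.symm
    (by have := D.adjw_a; omega)
  have hpath : NonBacktracking C.graph [u, v, a, b, x, c, d] :=
    ⟨hvu.symm, hua, D.nonBacktracking_cons hva.symm hv.ne_b⟩
  have hud : φ u ⬝ᵥ φ d = 0 := D.dotProduct_far hpath 0 6
  rw [D.dotProduct_eq_sub_of_adj hu huw hs (hdot _ ▸ D.dotProduct_adj hvu)] at hud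
  have hvd0 := D.dotProduct_not_adj hv.ne_d hvd
  rw [hdot] at hvd0
  have hs0 : s ≠ 0 := by omega
  exact D.coordinates_d_ne ((mul_eq_zero.mp hud).resolve_left hs0)
    ((mul_eq_zero.mp hvd0).resolve_left hs0)

theorem false_of_e₂_ne_zero (D : DisjointChain φ a b x c d e₁ e₂ e₃ f g h)
    (hv : Outside a b x c d v) (h₂ : e₂ ⬝ᵥ φ v ≠ 0) (hg : g ⬝ᵥ φ v ≠ 0) : False := by
  obtain ⟨s, hs, hdot⟩ := D.dotProduct_of_e₂_ne_zero hv h₂ hg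
  obtain ⟨hdeg, hvw⟩ := D.deg_eq_two_and_adjw_eq_one hv (Or.inr h₂)
  have hva := D.not_adj_a_of_e₂_ne_zero hv h₂ hg
  have hvd := D.not_adj_d_of_adjw_c_pos (by rw [D.adjw_c_eq]; decide) hv.ne_c
    (by rw [hvw]; decide)
  have houtside {u : C.V} (hvu : C.graph.Adj v u) : Outside a b x c d u :=
    D.outside_of_adj hv hvu (fun h => hva (h ▸ hvu)) fun h => hvd (h ▸ hvu)
  obtain ⟨u, u', hvu, hvu', hne, huw⟩ := D.exists_adj_pair hdeg (D.not_isBad_outside hv)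
  have huu' := D.dotProduct_eq_sub_of_adj (houtside hvu) huw hs (hdot _ ▸ D.dotProduct_adj hvu)
    (φ u')
  obtain ⟨-, -, -, -, hg', hh'⟩ := D.coordinates_of_adj (houtside hvu') hs
    (hdot _ ▸ D.dotProduct_adj hvu')
  rw [hg', hh'] at huu'
  rcases D.dotProduct_cases hne with ⟨h, -⟩ | ⟨h, -⟩ <;> rcases hs with rfl | rfl <;> omega

theorem e₂_dotProduct_eq_zero (D : DisjointChain φ a b x c d e₁ e₂ e₃ f g h)
    (hv : Outside a b x c d v) : e₂ ⬝ᵥ φ v = 0 := by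
  by_contra h₂
  have hgh := (D.relations_outside hv).2.2
  by_cases hg : g ⬝ᵥ φ v = 0
  · exact D.swap.false_of_e₂_ne_zero hv h₂ (by omega)
  · exact D.false_of_e₂_ne_zero hv h₂ hg

theorem dotProduct_outside_eq_zero (D : DisjointChain φ a b x c d e₁ e₂ e₃ f g h)
    (hv : Outside a b x c d v) : e₁ ⬝ᵥ φ v = 0 ∧ e₂ ⬝ᵥ φ v = 0 ∧ e₃ ⬝ᵥ φ v = 0 := by
  have := D.e₁_dotProduct_eq_zero hv
  have := D.e₂_dotProduct_eq_zero hv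
  have := D.relations_outside hv
  omega

end DisjointChain

/-- `k` and `m` behave like `φ a` and `φ d` towards all vertices outside the bad part, but are
shorter. -/
structure ReducedEnds {C : Config} {N : ℕ} (φ : C.V → Fin N → ℤ) (a b x c d : C.V)
    (k m : Fin N → ℤ) : Prop extends BadChain φ a b x c d where
  adjw_c_eq : C.adjw c = 1
  deg_a : C.deg a = 2
  k_dotProduct_k : k ⬝ᵥ k = 1
  m_dotProduct_m : m ⬝ᵥ m = φ d ⬝ᵥ φ d - 1
  k_dotProduct_m : k ⬝ᵥ m = -1
  k_dotProduct : ∀ p, Outside a b x c d p → k ⬝ᵥ φ p = φ a ⬝ᵥ φ p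
  m_dotProduct : ∀ p, Outside a b x c d p → m ⬝ᵥ φ p = φ d ⬝ᵥ φ p

namespace ReducedEnds

variable {C : Config} {N : ℕ} {φ : C.V → Fin N → ℤ} {a b x c d t y z : C.V} {k m : Fin N → ℤ}

theorem exists_path_of_deg_d (R : ReducedEnds φ a b x c d k m) (hdeg : C.deg d = 2) :
    ∃ y t, φ y ⬝ᵥ φ y = 2 ∧ NonBacktracking C.graph [a, b, x, c, d, y, t] := by
  obtain ⟨y, hdy, hyc⟩ := Config.exists_adj_ne hdeg c
  have hy : C.adjw y = 0 := R.adjw_eq_zero_of_not_isBad R.not_isBad_d R.adj_cd.symm hdy hyc.symm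
    (by rw [R.adjw_c_eq]; decide)
  obtain ⟨t, hyt, htd⟩ := Config.exists_adj_ne (R.deg_eq_two_of_adjw_eq_zero hy) d
  exact ⟨y, t, R.dotProduct_self_of_adjw_eq_zero hy, R.adj_ab, R.ne_ax, R.adj_bx, R.ne_bc,
    R.adj_xc, R.ne_xd, R.adj_cd, hyc.symm, hdy, htd.symm, hyt⟩

theorem dotProduct_path (R : ReducedEnds φ a b x c d k m)
    (hpath : NonBacktracking C.graph [a, b, x, c, d, y, t]) :
    k ⬝ᵥ φ y = 0 ∧ k ⬝ᵥ φ t = 0 ∧ m ⬝ᵥ φ y = -1 ∧ m ⬝ᵥ φ t = 0 := by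
  have hfar (i j : ℕ) (hij : i + 2 ≤ j := by decide) (hj : j < 7 := by decide) :=
    (hpath.ne_and_not_adj R.linear.2 hij (by simpa using hj)).1.symm
  have hdy : C.graph.Adj d y := hpath.adj_getElem_succ 4 (by simp)
  have hy : Outside a b x c d y := ⟨hfar 0 5, hfar 1 5, hfar 2 5, hfar 3 5, hdy.ne'⟩
  have ht : Outside a b x c d t := ⟨hfar 0 6, hfar 1 6, hfar 2 6, hfar 3 6, hfar 4 6⟩
  rw [R.k_dotProduct y hy, R.k_dotProduct t ht, R.m_dotProduct y hy, R.m_dotProduct t ht]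
  exact ⟨R.dotProduct_far hpath 0 5, R.dotProduct_far hpath 0 6, R.dotProduct_adj hdy,
    R.dotProduct_far hpath 4 6⟩

theorem false_of_unit (R : ReducedEnds φ a b x c d k m) {n p : Fin N → ℤ} {r : C.V}
    (hr : r ≠ d) (hnn : n ⬝ᵥ n = 1) (hpp : p ⬝ᵥ p = C.deg d) (hnp : n ⬝ᵥ p = -1)
    (hnr : n ⬝ᵥ φ r = -1) (hpr : p ⬝ᵥ φ r = 0)
    (hpath : ∀ y t, NonBacktracking C.graph [a, b, x, c, d, y, t] →
      n ⬝ᵥ φ y = 0 ∧ n ⬝ᵥ φ t = 0 ∧ p ⬝ᵥ φ y = -1 ∧ p ⬝ᵥ φ t = 0 ∧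
        φ r ⬝ᵥ φ y = 0 ∧ φ r ⬝ᵥ φ t = 0) : False := by
  have hdeg : C.deg d = 1 ∨ C.deg d = 2 := by
    have := Config.one_le_deg R.adj_cd.symm
    have := R.deg_le_two d
    omega
  rcases hdeg with hdeg | hdeg
  · rcases unit_dotProduct_unit hnn (by omega : p ⬝ᵥ p = 1) with h | rfl | rfl
    · omega
    · omega
    · rw [neg_dotProduct] at hpr
      omega
  · obtain ⟨y, t, hyy, hyt⟩ := R.exists_path_of_deg_d hdeg
    obtain ⟨hny, hnt, hpy, hpt, hry, hrt⟩ := hpath y t hyt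
    have key := dotProduct_add_two_mul_add_three_mul_eq_zero hnn (by omega) hyy
      (R.dotProduct_self_le_three R.adjw_c_eq hr) hnp hnr hpy hny hpr
      (by rw [dotProduct_comm, hry]) (φ t)
    have hyt : φ y ⬝ᵥ φ t = -1 := R.dotProduct_adj (hyt.adj_getElem_succ 5 (by simp))
    omega

theorem adjw_d_ne_one (R : ReducedEnds φ a b x c d k m) : C.adjw d ≠ 1 := by
  intro hd
  obtain ⟨z, haz, hzb⟩ := Config.exists_adj_ne R.deg_a b
  have hz := R.outside_of_adj_a haz hzb
  have hkz : k ⬝ᵥ φ z = -1 := by rw [R.k_dotProduct z hz, R.dotProduct_adj haz]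
  have hmz : m ⬝ᵥ φ z = 0 := by
    rw [R.m_dotProduct z hz, dotProduct_comm]
    exact R.dotProduct_far (R.nonBacktracking_cons haz hzb) 0 5
  have hmm : m ⬝ᵥ m = C.deg d := by rw [R.m_dotProduct_m, R.dotProduct_self, hd]; ring
  refine R.false_of_unit hz.ne_d R.k_dotProduct_k hmm R.k_dotProduct_m hkz hmz fun y t hpath => ?_
  have hpath' : NonBacktracking C.graph [z, a, b, x, c, d, y, t] := ⟨haz.symm, hzb, hpath⟩
  obtain ⟨hky, hkt, hmy, hmt⟩ := R.dotProduct_path hpath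
  exact ⟨hky, hkt, hmy, hmt, R.dotProduct_far hpath' 0 6, R.dotProduct_far hpath' 0 7⟩

theorem adjw_eq_zero_of_adj_a (R : ReducedEnds φ a b x c d k m) (hd : C.adjw d = 2)
    (haz : C.graph.Adj a z) (hzb : z ≠ b) : C.adjw z = 0 := by
  by_contra hne
  have := R.adjw_nonneg z
  have := R.adjw_le_one R.adjw_c_eq (R.outside_of_adj_a haz hzb).ne_d
  have := R.adjw_a
  have := R.adjw_le_one R.adjw_c_eq R.ne_ad
  refine R.false_of_pattern (p := [1, 1, 0, 1, 1, 2]) ?_ (by decide)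
    (R.nonBacktracking_cons haz hzb)
  simp only [List.map_cons, List.map_nil, hd, R.adjw_b, R.adjw_x, R.adjw_c_eq,
    (by omega : C.adjw a = 1), (by omega : C.adjw z = 1)]

theorem adjw_d_ne_two (R : ReducedEnds φ a b x c d k m) : C.adjw d ≠ 2 := by
  intro hd
  obtain ⟨z, haz, hzb⟩ := Config.exists_adj_ne R.deg_a b
  have hzw := R.adjw_eq_zero_of_adj_a hd haz hzb
  obtain ⟨r, hzr, hra⟩ := Config.exists_adj_ne (R.deg_eq_two_of_adjw_eq_zero hzw) a
  have hpath : NonBacktracking C.graph [r, z, a, b, x, c, d] :=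
    ⟨hzr.symm, hra, R.nonBacktracking_cons haz hzb⟩
  have hz := R.outside_of_adj_a haz hzb
  have hr : Outside a b x c d r := R.outside_of_adj hz hzr hra
    (hpath.ne_and_not_adj_of_mem R.linear.2 (by simp)).1
  have hkz := (R.k_dotProduct z hz).trans (R.dotProduct_adj haz)
  have hkr := (R.k_dotProduct r hr).trans ((dotProduct_comm _ _).trans (R.dotProduct_far hpath 0 2))
  have hmz := (R.m_dotProduct z hz).trans ((dotProduct_comm _ _).trans (R.dotProduct_far hpath 1 6))
  have hmr := (R.m_dotProduct r hr).trans ((dotProduct_comm _ _).trans (R.dotProduct_far hpath 0 6))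
  have hzr' := R.dotProduct_adj hzr
  have hzz := R.dotProduct_self_of_adjw_eq_zero hzw
  have hkk := R.k_dotProduct_k
  have hkm := R.k_dotProduct_m
  refine R.false_of_unit (n := φ z + k) (p := m + k) hr.ne_d ?_ ?_ ?_ ?_ ?_ fun y t hyt => ?_ <;>
    simp only [add_dotProduct, dotProduct_add, dotProduct_comm (φ z) k, dotProduct_comm m k,
      dotProduct_comm (φ z) m, R.m_dotProduct_m, R.dotProduct_self d, hd]
  iterate 5 omega
  have hpath' : NonBacktracking C.graph [r, z, a, b, x, c, d, y, t] :=
    ⟨hzr.symm, hra, haz.symm, hzb, hyt⟩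
  have hzy : φ z ⬝ᵥ φ y = 0 := R.dotProduct_far hpath' 1 7
  have hzt : φ z ⬝ᵥ φ t = 0 := R.dotProduct_far hpath' 1 8
  have hry : φ r ⬝ᵥ φ y = 0 := R.dotProduct_far hpath' 0 7
  have hrt : φ r ⬝ᵥ φ t = 0 := R.dotProduct_far hpath' 0 8
  have := R.dotProduct_path hyt
  omega

end ReducedEnds

/-- A bad chain with `C.adjw c = 1` in which the supports of `φ b` and `φ c` meet. -/
structure OverlapChain {C : Config} {N : ℕ} (φ : C.V → Fin N → ℤ) (a b x c d : C.V)
    (e₁ e₂ e₃ f h : Fin N → ℤ) : Prop extends BadChain φ a b x c d where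
  adjw_c_eq : C.adjw c = 1
  frame : Frame φ b x e₁ e₂ e₃ f [h]
  c_eq : φ c = h - f - e₁

namespace OverlapChain

variable {C : Config} {N : ℕ} {φ : C.V → Fin N → ℤ} {a b x c d : C.V}
  {e₁ e₂ e₃ f h : Fin N → ℤ} {u v : C.V}

theorem swap (D : OverlapChain φ a b x c d e₁ e₂ e₃ f h) :
    OverlapChain φ a b x c d e₁ e₃ e₂ f h where
  __ := D
  frame := D.frame.swap

theorem c_dotProduct (D : OverlapChain φ a b x c d e₁ e₂ e₃ f h) (p : Fin N → ℤ) :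
    φ c ⬝ᵥ p = h ⬝ᵥ p - f ⬝ᵥ p - e₁ ⬝ᵥ p := by
  rw [D.c_eq, sub_dotProduct, sub_dotProduct]

theorem bessel (D : OverlapChain φ a b x c d e₁ e₂ e₃ f h) (p : Fin N → ℤ) :
    (h ⬝ᵥ p) * (h ⬝ᵥ p) + (f ⬝ᵥ p) * (f ⬝ᵥ p) + (e₁ ⬝ᵥ p) * (e₁ ⬝ᵥ p) +
      (e₂ ⬝ᵥ p) * (e₂ ⬝ᵥ p) + (e₃ ⬝ᵥ p) * (e₃ ⬝ᵥ p) ≤ p ⬝ᵥ p := by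
  simpa [add_assoc] using D.frame.orthonormal.sum_sq_le p

theorem dotProduct_eq_of_norm (D : OverlapChain φ a b x c d e₁ e₂ e₃ f h) {p : Fin N → ℤ}
    (hp : p ⬝ᵥ p ≤ (h ⬝ᵥ p) * (h ⬝ᵥ p) + (f ⬝ᵥ p) * (f ⬝ᵥ p) + (e₁ ⬝ᵥ p) * (e₁ ⬝ᵥ p) +
      (e₂ ⬝ᵥ p) * (e₂ ⬝ᵥ p) + (e₃ ⬝ᵥ p) * (e₃ ⬝ᵥ p)) (q : Fin N → ℤ) :
    p ⬝ᵥ q = (h ⬝ᵥ p) * (h ⬝ᵥ q) + (f ⬝ᵥ p) * (f ⬝ᵥ q) + (e₁ ⬝ᵥ p) * (e₁ ⬝ᵥ q) +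
      (e₂ ⬝ᵥ p) * (e₂ ⬝ᵥ q) + (e₃ ⬝ᵥ p) * (e₃ ⬝ᵥ q) := by
  have hsum := D.frame.orthonormal.dotProduct_eq_sum (p := p)
    (by simpa [add_assoc] using le_antisymm hp (D.bessel p)) q
  simpa [add_assoc] using hsum

theorem relations_outside (D : OverlapChain φ a b x c d e₁ e₂ e₃ f h)
    (hu : Outside a b x c d u) : e₁ ⬝ᵥ φ u = 0 ∧ f ⬝ᵥ φ u = 0 ∧ h ⬝ᵥ φ u = 0 ∧
      e₃ ⬝ᵥ φ u = -(e₂ ⬝ᵥ φ u) := by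
  have hf : f ⬝ᵥ φ u = e₁ ⬝ᵥ φ u := by
    have := D.frame.b_dotProduct (φ u) ▸ D.dotProduct_b_outside hu
    omega
  have hh : h ⬝ᵥ φ u = 2 * (e₁ ⬝ᵥ φ u) := by
    have := D.c_dotProduct (φ u) ▸ D.dotProduct_c_outside hu
    omega
  have h₁ : e₁ ⬝ᵥ φ u = 0 := by
    have hbessel := (D.bessel (φ u)).trans (D.dotProduct_self_le_three D.adjw_c_eq hu.ne_d)
    rw [hh, hf] at hbessel
    by_contra hne
    nlinarith [mul_self_nonneg (e₂ ⬝ᵥ φ u), mul_self_nonneg (e₃ ⬝ᵥ φ u), mul_self_pos.mpr hne]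
  have := D.frame.x_dotProduct (φ u) ▸ D.dotProduct_x_outside hu
  omega

theorem relations_a (D : OverlapChain φ a b x c d e₁ e₂ e₃ f h) :
    f ⬝ᵥ φ a = e₁ ⬝ᵥ φ a - 1 ∧ h ⬝ᵥ φ a = 2 * (e₁ ⬝ᵥ φ a) - 1 ∧
      e₃ ⬝ᵥ φ a = -(e₁ ⬝ᵥ φ a + e₂ ⬝ᵥ φ a) := by
  have := D.frame.b_dotProduct (φ a) ▸ D.dotProduct_adj D.adj_ab.symm
  have := D.frame.x_dotProduct (φ a) ▸ dotProduct_comm (φ a) (φ x) ▸ D.dotProduct_ax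
  have := D.c_dotProduct (φ a) ▸ dotProduct_comm (φ a) (φ c) ▸ D.dotProduct_ac
  omega

theorem relations_d (D : OverlapChain φ a b x c d e₁ e₂ e₃ f h) :
    f ⬝ᵥ φ d = e₁ ⬝ᵥ φ d ∧ h ⬝ᵥ φ d = 2 * (e₁ ⬝ᵥ φ d) - 1 ∧
      e₃ ⬝ᵥ φ d = -(e₁ ⬝ᵥ φ d + e₂ ⬝ᵥ φ d) := by
  have := D.frame.b_dotProduct (φ d) ▸ D.dotProduct_bd
  have := D.frame.x_dotProduct (φ d) ▸ D.dotProduct_xd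
  have := D.c_dotProduct (φ d) ▸ D.dotProduct_adj D.adj_cd
  omega

theorem coordinates_a (D : OverlapChain φ a b x c d e₁ e₂ e₃ f h) :
    (e₁ ⬝ᵥ φ a = 0 ∧ e₂ ⬝ᵥ φ a = 0) ∨ (e₁ ⬝ᵥ φ a = 1 ∧ (e₂ ⬝ᵥ φ a = 0 ∨ e₂ ⬝ᵥ φ a = -1)) := by
  obtain ⟨hf, hh, h₃⟩ := D.relations_a
  have hbessel := (D.bessel (φ a)).trans (D.dotProduct_self_le_three D.adjw_c_eq D.ne_ad)
  have := mul_self_nonneg (h ⬝ᵥ φ a)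
  have := mul_self_nonneg (f ⬝ᵥ φ a)
  have := mul_self_nonneg (e₁ ⬝ᵥ φ a)
  have := mul_self_nonneg (e₂ ⬝ᵥ φ a)
  have := mul_self_nonneg (e₃ ⬝ᵥ φ a)
  have h₁ := eq_neg_one_or_zero_or_one (by omega : (e₁ ⬝ᵥ φ a) * (e₁ ⬝ᵥ φ a) ≤ 3)
  have h₂ := eq_neg_one_or_zero_or_one (by omega : (e₂ ⬝ᵥ φ a) * (e₂ ⬝ᵥ φ a) ≤ 3)
  rcases h₁ with h₁ | h₁ | h₁ <;> rcases h₂ with h₂ | h₂ | h₂ <;>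
    simp [hf, hh, h₃, h₁, h₂] at hbessel ⊢

theorem dotProduct_d_le_four (D : OverlapChain φ a b x c d e₁ e₂ e₃ f h) : φ d ⬝ᵥ φ d ≤ 4 := by
  have := (D.dotProduct_self_bounds D.adj_cd.symm).2
  have := D.adjw_d
  omega

theorem coordinates_d (D : OverlapChain φ a b x c d e₁ e₂ e₃ f h) :
    e₁ ⬝ᵥ φ d = 0 ∨ (e₁ ⬝ᵥ φ d = 1 ∧ (e₂ ⬝ᵥ φ d = 0 ∨ e₂ ⬝ᵥ φ d = -1)) := by
  obtain ⟨hf, hh, h₃⟩ := D.relations_d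
  have hbessel := (D.bessel (φ d)).trans D.dotProduct_d_le_four
  rw [hf, hh, h₃] at hbessel
  generalize e₁ ⬝ᵥ φ d = p at *
  generalize e₂ ⬝ᵥ φ d = q at *
  have hp : p * p ≤ 3 := by nlinarith only [hbessel]
  have hq : q * q ≤ 3 := by nlinarith only [hbessel]
  rcases eq_neg_one_or_zero_or_one hp with rfl | rfl | rfl <;>
    rcases eq_neg_one_or_zero_or_one hq with rfl | rfl | rfl <;> simp at hbessel ⊢

theorem e₁_dotProduct_d (D : OverlapChain φ a b x c d e₁ e₂ e₃ f h) (h₁a : e₁ ⬝ᵥ φ a = 0)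
    (h₂a : e₂ ⬝ᵥ φ a = 0) : e₁ ⬝ᵥ φ d = 0 := by
  refine D.coordinates_d.resolve_right fun ⟨h₁, h₂⟩ => ?_
  obtain ⟨hf, hh, h₃⟩ := D.relations_d
  obtain ⟨hfa, hha, h₃a⟩ := D.relations_a
  have hda := D.dotProduct_eq_of_norm (p := φ d) (D.dotProduct_d_le_four.trans
    (by rcases h₂ with h₂ | h₂ <;> simp [hf, hh, h₃, h₁, h₂])) (φ a)
  rw [dotProduct_comm, D.dotProduct_ad, hf, hh, h₁, hfa, hha, h₃a, h₁a, h₂a] at hda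
  simp at hda

theorem reducedEnds (D : OverlapChain φ a b x c d e₁ e₂ e₃ f h) (h₁a : e₁ ⬝ᵥ φ a = 0)
    (h₂a : e₂ ⬝ᵥ φ a = 0) : ReducedEnds φ a b x c d (φ a + f + h) (φ d + h) := by
  have hhh : h ⬝ᵥ h = 1 := D.frame.orthonormal.1 h (by simp)
  have hff : f ⬝ᵥ f = 1 := D.frame.orthonormal.1 f (by simp)
  have hhf : h ⬝ᵥ f = 0 := List.rel_of_pairwise_cons D.frame.orthonormal.2 (by simp)
  obtain ⟨hfa, hha, -⟩ := D.relations_a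
  obtain ⟨hfd, hhd, -⟩ := D.relations_d
  have h₁d := D.e₁_dotProduct_d h₁a h₂a
  have had := D.dotProduct_ad
  have hkm : (φ a + f + h) ⬝ᵥ (φ d + h) = -1 := by
    simp only [add_dotProduct, dotProduct_add, dotProduct_comm _ h]
    omega
  have hmm : (φ d + h) ⬝ᵥ (φ d + h) = φ d ⬝ᵥ φ d - 1 := by
    simp only [add_dotProduct, dotProduct_add, dotProduct_comm _ h]
    omega
  have hkk : (φ a + f + h) ⬝ᵥ (φ a + f + h) = φ a ⬝ᵥ φ a - 2 := by
    simp only [add_dotProduct, dotProduct_add, dotProduct_comm (φ a), dotProduct_comm f h]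
    omega
  have haa : φ a ⬝ᵥ φ a = 3 := by
    have hne : (φ a + f + h) ⬝ᵥ (φ a + f + h) ≠ 0 := fun h0 => by
      simp [dotProduct_self_eq_zero.mp h0] at hkm
    have := D.dotProduct_self_le_three D.adjw_c_eq D.ne_ad
    have := D.two_le_dotProduct_self a
    omega
  have hdeg : C.deg a = 2 := by
    have := D.adjw_le_one D.adjw_c_eq D.ne_ad
    have := D.dotProduct_self a
    have := D.deg_le_two a
    omega
  refine ⟨D.toBadChain, D.adjw_c_eq, hdeg, by omega, hmm, hkm, fun p hp => ?_, fun p hp => ?_⟩ <;>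
    obtain ⟨-, hf, hh, -⟩ := D.relations_outside hp <;> simp only [add_dotProduct, hf, hh, add_zero]

theorem e₁_dotProduct_a (D : OverlapChain φ a b x c d e₁ e₂ e₃ f h) : e₁ ⬝ᵥ φ a = 1 := by
  refine (D.coordinates_a.resolve_left fun ⟨h₁a, h₂a⟩ => ?_).1
  have R := D.reducedEnds h₁a h₂a
  exact R.adjw_d.elim R.adjw_d_ne_one R.adjw_d_ne_two

theorem a_dotProduct (D : OverlapChain φ a b x c d e₁ e₂ e₃ f h) (h₂a : e₂ ⬝ᵥ φ a = -1)
    (q : Fin N → ℤ) : φ a ⬝ᵥ q = h ⬝ᵥ q + e₁ ⬝ᵥ q - e₂ ⬝ᵥ q := by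
  obtain ⟨hf, hh, h₃⟩ := D.relations_a
  rw [D.dotProduct_eq_of_norm (p := φ a) ((D.dotProduct_self_le_three D.adjw_c_eq D.ne_ad).trans
    (by simp [hf, hh, h₃, D.e₁_dotProduct_a, h₂a])) q, hf, hh, h₃, D.e₁_dotProduct_a, h₂a]
  ring

theorem e₂_dotProduct_d (D : OverlapChain φ a b x c d e₁ e₂ e₃ f h) (h₂a : e₂ ⬝ᵥ φ a = -1) :
    e₁ ⬝ᵥ φ d = 0 ∧ e₂ ⬝ᵥ φ d = -1 := by
  have had := D.a_dotProduct h₂a (φ d) ▸ D.dotProduct_ad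
  have hd := D.coordinates_d
  obtain ⟨-, hh, -⟩ := D.relations_d
  omega

theorem residual_dotProduct_residual (D : OverlapChain φ a b x c d e₁ e₂ e₃ f h)
    (p q : Fin N → ℤ) : residual [h, f, e₁, e₂, e₃] p ⬝ᵥ residual [h, f, e₁, e₂, e₃] q =
      p ⬝ᵥ q - ((h ⬝ᵥ p) * (h ⬝ᵥ q) + (f ⬝ᵥ p) * (f ⬝ᵥ q) + (e₁ ⬝ᵥ p) * (e₁ ⬝ᵥ q) +
        (e₂ ⬝ᵥ p) * (e₂ ⬝ᵥ q) + (e₃ ⬝ᵥ p) * (e₃ ⬝ᵥ q)) := by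
  simpa [add_assoc] using D.frame.orthonormal.residual_dotProduct_residual p q

theorem e₂_dotProduct_outside (D : OverlapChain φ a b x c d e₁ e₂ e₃ f h)
    (h₂a : e₂ ⬝ᵥ φ a = -1) (hv : Outside a b x c d v) : e₂ ⬝ᵥ φ v = 0 := by
  obtain ⟨h₁, hf, hh, h₃⟩ := D.relations_outside hv
  have hav := D.a_dotProduct h₂a (φ v)
  rw [hh, h₁] at hav
  rcases D.dotProduct_cases hv.ne_a.symm with ⟨h0, -⟩ | ⟨h1, hadj⟩
  · omega
  have h₂ : e₂ ⬝ᵥ φ v = 1 := by omega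
  obtain ⟨h₁d, h₂d⟩ := D.e₂_dotProduct_d h₂a
  obtain ⟨hfd, hhd, h₃d⟩ := D.relations_d
  have hvd := D.dotProduct_not_adj hv.ne_d (D.not_adj_d_of_adj_a hadj hv.ne_b)
  have hvv := D.dotProduct_self_le_three D.adjw_c_eq hv.ne_d
  have hdd := D.dotProduct_d_le_four
  have hle := two_mul_abs_dotProduct_le (residual [h, f, e₁, e₂, e₃] (φ v))
    (residual [h, f, e₁, e₂, e₃] (φ d))
  simp only [D.residual_dotProduct_residual, hvd, h₁, hf, hh, h₃, h₂, h₁d, hfd, hhd, h₃d,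
    h₂d] at hle
  norm_num at hle
  omega

theorem dotProduct_outside_eq_zero (D : OverlapChain φ a b x c d e₁ e₂ e₃ f h)
    (hv : Outside a b x c d v) : e₁ ⬝ᵥ φ v = 0 ∧ e₂ ⬝ᵥ φ v = 0 ∧ e₃ ⬝ᵥ φ v = 0 := by
  obtain ⟨h₁, -, -, h₃⟩ := D.relations_outside hv
  obtain ⟨-, -, h₃a⟩ := D.relations_a
  have h₁a := D.e₁_dotProduct_a
  obtain h₂a | h₂a : e₃ ⬝ᵥ φ a = -1 ∨ e₂ ⬝ᵥ φ a = -1 := by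
    have := D.coordinates_a
    omega
  · have := D.swap.e₂_dotProduct_outside h₂a hv
    omega
  · have := D.e₂_dotProduct_outside h₂a hv
    omega

end OverlapChain

/-- A bad chain with `C.adjw c = 0`, the only kind that can be read in both directions. -/
structure BalancedChain {C : Config} {N : ℕ} (φ : C.V → Fin N → ℤ) (a b x c d : C.V)
    (e₁ e₂ e₃ f g : Fin N → ℤ) : Prop extends BadChain φ a b x c d where
  adjw_c_eq : C.adjw c = 0
  frame : Frame φ b x e₁ e₂ e₃ f [g]
  c_eq : φ c = g - e₂

theorem balanced_coordinates_outside {p q : ℤ}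
    (h : 2 * (p * p) + 2 * (q * q) + (p + q) * (p + q) ≤ 5) :
    (p = 0 ∧ q = 0) ∨ ((p = 1 ∨ p = -1) ∧ q = 0) ∨ (p = 0 ∧ (q = 1 ∨ q = -1)) ∨
      ((p = 1 ∨ p = -1) ∧ q = -p) := by
  have := mul_self_nonneg p
  have := mul_self_nonneg q
  have := mul_self_nonneg (p + q)
  rcases eq_neg_one_or_zero_or_one (by omega : p * p ≤ 3) with rfl | rfl | rfl <;>
    rcases eq_neg_one_or_zero_or_one (by omega : q * q ≤ 3) with rfl | rfl | rfl <;> omega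

theorem balanced_coordinates_end {p q : ℤ}
    (h : (p - 1) * (p - 1) + p * p + 2 * (q * q) + (p + q) * (p + q) ≤ 4) :
    (p = 0 ∧ (q = 0 ∨ q = 1 ∨ q = -1)) ∨ (p = 1 ∧ (q = 0 ∨ q = -1)) := by
  have := mul_self_nonneg (p + q)
  have hp : p * p ≤ 3 := by nlinarith only [h]
  have hq : q * q ≤ 3 := by nlinarith only [h]
  rcases eq_neg_one_or_zero_or_one hp with rfl | rfl | rfl <;>
    rcases eq_neg_one_or_zero_or_one hq with rfl | rfl | rfl <;> omega

namespace BalancedChain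

variable {C : Config} {N : ℕ} {φ : C.V → Fin N → ℤ} {a b x c d : C.V}
  {e₁ e₂ e₃ f g : Fin N → ℤ} {u v : C.V}

local notation "ρ" => residual [g, f, e₁, e₂, e₃]

theorem reverse (D : BalancedChain φ a b x c d e₁ e₂ e₃ f g) :
    BalancedChain φ d c x b a e₂ e₁ e₃ g f where
  toBadChain := D.toBadChain.reverse D.adjw_c_eq
  adjw_c_eq := D.adjw_b
  frame := ⟨D.frame.orthonormal.perm (.trans (.swap _ _ _) (.cons _ (.cons _ (.swap _ _ _)))),
    by rw [D.frame.x_eq, add_comm e₁], D.c_eq⟩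
  c_eq := D.frame.b_eq

theorem c_dotProduct (D : BalancedChain φ a b x c d e₁ e₂ e₃ f g) (p : Fin N → ℤ) :
    φ c ⬝ᵥ p = g ⬝ᵥ p - e₂ ⬝ᵥ p := by
  rw [D.c_eq, sub_dotProduct]

theorem relations_outside (D : BalancedChain φ a b x c d e₁ e₂ e₃ f g)
    (hu : Outside a b x c d u) :
    f ⬝ᵥ φ u = e₁ ⬝ᵥ φ u ∧ g ⬝ᵥ φ u = e₂ ⬝ᵥ φ u ∧ e₃ ⬝ᵥ φ u = -(e₁ ⬝ᵥ φ u + e₂ ⬝ᵥ φ u) := by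
  have := D.frame.b_dotProduct (φ u) ▸ D.dotProduct_b_outside hu
  have := D.frame.x_dotProduct (φ u) ▸ D.dotProduct_x_outside hu
  have := D.c_dotProduct (φ u) ▸ D.dotProduct_c_outside hu
  omega

theorem relations_a (D : BalancedChain φ a b x c d e₁ e₂ e₃ f g) :
    f ⬝ᵥ φ a = e₁ ⬝ᵥ φ a - 1 ∧ g ⬝ᵥ φ a = e₂ ⬝ᵥ φ a ∧
      e₃ ⬝ᵥ φ a = -(e₁ ⬝ᵥ φ a + e₂ ⬝ᵥ φ a) := by
  have := D.frame.b_dotProduct (φ a) ▸ D.dotProduct_adj D.adj_ab.symm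
  have := D.frame.x_dotProduct (φ a) ▸ dotProduct_comm (φ a) (φ x) ▸ D.dotProduct_ax
  have := D.c_dotProduct (φ a) ▸ dotProduct_comm (φ a) (φ c) ▸ D.dotProduct_ac
  omega

theorem residual_dotProduct_residual (D : BalancedChain φ a b x c d e₁ e₂ e₃ f g)
    (p q : Fin N → ℤ) : ρ p ⬝ᵥ ρ q =
      p ⬝ᵥ q - ((g ⬝ᵥ p) * (g ⬝ᵥ q) + (f ⬝ᵥ p) * (f ⬝ᵥ q) + (e₁ ⬝ᵥ p) * (e₁ ⬝ᵥ q) +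
        (e₂ ⬝ᵥ p) * (e₂ ⬝ᵥ q) + (e₃ ⬝ᵥ p) * (e₃ ⬝ᵥ q)) := by
  simpa [add_assoc] using D.frame.orthonormal.residual_dotProduct_residual p q

theorem residual_outside_outside (D : BalancedChain φ a b x c d e₁ e₂ e₃ f g)
    (hu : Outside a b x c d u) (hv : Outside a b x c d v) :
    ρ (φ u) ⬝ᵥ ρ (φ v) =
      φ u ⬝ᵥ φ v - (2 * ((e₁ ⬝ᵥ φ u) * (e₁ ⬝ᵥ φ v)) + 2 * ((e₂ ⬝ᵥ φ u) * (e₂ ⬝ᵥ φ v)) +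
        (e₁ ⬝ᵥ φ u + e₂ ⬝ᵥ φ u) * (e₁ ⬝ᵥ φ v + e₂ ⬝ᵥ φ v)) := by
  obtain ⟨hfu, hgu, h₃u⟩ := D.relations_outside hu
  obtain ⟨hfv, hgv, h₃v⟩ := D.relations_outside hv
  rw [D.residual_dotProduct_residual, hfu, hgu, h₃u, hfv, hgv, h₃v]
  ring

theorem residual_outside_a (D : BalancedChain φ a b x c d e₁ e₂ e₃ f g)
    (hu : Outside a b x c d u) :
    ρ (φ u) ⬝ᵥ ρ (φ a) =
      φ u ⬝ᵥ φ a - ((e₁ ⬝ᵥ φ u) * (3 * (e₁ ⬝ᵥ φ a) + e₂ ⬝ᵥ φ a - 1) +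
        (e₂ ⬝ᵥ φ u) * (e₁ ⬝ᵥ φ a + 3 * (e₂ ⬝ᵥ φ a))) := by
  obtain ⟨hf, hg, h₃⟩ := D.relations_outside hu
  obtain ⟨hfa, hga, h₃a⟩ := D.relations_a
  rw [D.residual_dotProduct_residual, hf, hg, h₃, hfa, hga, h₃a]
  ring

theorem residual_a_a (D : BalancedChain φ a b x c d e₁ e₂ e₃ f g) :
    ρ (φ a) ⬝ᵥ ρ (φ a) =
      φ a ⬝ᵥ φ a - ((e₁ ⬝ᵥ φ a - 1) * (e₁ ⬝ᵥ φ a - 1) + (e₁ ⬝ᵥ φ a) * (e₁ ⬝ᵥ φ a) +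
        2 * ((e₂ ⬝ᵥ φ a) * (e₂ ⬝ᵥ φ a)) +
        (e₁ ⬝ᵥ φ a + e₂ ⬝ᵥ φ a) * (e₁ ⬝ᵥ φ a + e₂ ⬝ᵥ φ a)) := by
  obtain ⟨hfa, hga, h₃a⟩ := D.relations_a
  rw [D.residual_dotProduct_residual, hfa, hga, h₃a]
  ring

theorem residual_a_d (D : BalancedChain φ a b x c d e₁ e₂ e₃ f g) :
    ρ (φ a) ⬝ᵥ ρ (φ d) =
      e₂ ⬝ᵥ φ a + e₁ ⬝ᵥ φ d - (3 * ((e₁ ⬝ᵥ φ a) * (e₁ ⬝ᵥ φ d)) +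
        3 * ((e₂ ⬝ᵥ φ a) * (e₂ ⬝ᵥ φ d)) + (e₁ ⬝ᵥ φ a) * (e₂ ⬝ᵥ φ d) +
        (e₂ ⬝ᵥ φ a) * (e₁ ⬝ᵥ φ d)) := by
  obtain ⟨hfa, hga, h₃a⟩ := D.relations_a
  obtain ⟨hgd, hfd, h₃d⟩ := D.reverse.relations_a
  rw [D.residual_dotProduct_residual, D.dotProduct_ad, hfa, hga, h₃a, hgd, hfd, h₃d]
  ring

theorem bessel_outside (D : BalancedChain φ a b x c d e₁ e₂ e₃ f g) (hu : Outside a b x c d u) :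
    2 * ((e₁ ⬝ᵥ φ u) * (e₁ ⬝ᵥ φ u)) + 2 * ((e₂ ⬝ᵥ φ u) * (e₂ ⬝ᵥ φ u)) +
      (e₁ ⬝ᵥ φ u + e₂ ⬝ᵥ φ u) * (e₁ ⬝ᵥ φ u + e₂ ⬝ᵥ φ u) ≤ φ u ⬝ᵥ φ u := by
  have h := dotProduct_self_nonneg_int (ρ (φ u))
  rw [D.residual_outside_outside hu hu] at h
  omega

theorem coordinates_outside (D : BalancedChain φ a b x c d e₁ e₂ e₃ f g)
    (hu : Outside a b x c d u) :
    (e₁ ⬝ᵥ φ u = 0 ∧ e₂ ⬝ᵥ φ u = 0) ∨ ((e₁ ⬝ᵥ φ u = 1 ∨ e₁ ⬝ᵥ φ u = -1) ∧ e₂ ⬝ᵥ φ u = 0) ∨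
      (e₁ ⬝ᵥ φ u = 0 ∧ (e₂ ⬝ᵥ φ u = 1 ∨ e₂ ⬝ᵥ φ u = -1)) ∨
      ((e₁ ⬝ᵥ φ u = 1 ∨ e₁ ⬝ᵥ φ u = -1) ∧ e₂ ⬝ᵥ φ u = -(e₁ ⬝ᵥ φ u)) := by
  refine balanced_coordinates_outside ((D.bessel_outside hu).trans ?_)
  have := D.dotProduct_self u
  have := D.adjw_le_three u
  have := D.deg_le_two u
  omega

theorem coordinates_a (D : BalancedChain φ a b x c d e₁ e₂ e₃ f g) :
    (e₁ ⬝ᵥ φ a = 0 ∧ (e₂ ⬝ᵥ φ a = 0 ∨ e₂ ⬝ᵥ φ a = 1 ∨ e₂ ⬝ᵥ φ a = -1)) ∨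
      (e₁ ⬝ᵥ φ a = 1 ∧ (e₂ ⬝ᵥ φ a = 0 ∨ e₂ ⬝ᵥ φ a = -1)) := by
  refine balanced_coordinates_end ?_
  have h := dotProduct_self_nonneg_int (ρ (φ a))
  rw [D.residual_a_a] at h
  have := (D.dotProduct_self_bounds D.adj_ab).2
  have := D.adjw_a
  omega

theorem adjw_pos_of_dotProduct_ne_zero (D : BalancedChain φ a b x c d e₁ e₂ e₃ f g)
    (hu : Outside a b x c d u) (h : e₁ ⬝ᵥ φ u ≠ 0 ∨ e₂ ⬝ᵥ φ u ≠ 0) : 0 < C.adjw u := by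
  have hbessel := D.bessel_outside hu
  have := D.dotProduct_self u
  have := D.deg_le_two u
  rcases D.coordinates_outside hu with ⟨h₁, h₂⟩ | ⟨h₁ | h₁, h₂⟩ | ⟨h₁, h₂ | h₂⟩ | ⟨h₁ | h₁, h₂⟩ <;>
    simp [h₁, h₂] at hbessel h <;> omega

theorem residual_eq_zero_of_adjw_le_one (D : BalancedChain φ a b x c d e₁ e₂ e₃ f g)
    (hv : Outside a b x c d v) (hw : C.adjw v ≤ 1) (h₁ : e₁ ⬝ᵥ φ v ≠ 0) :
    ρ (φ v) = 0 ∧ e₂ ⬝ᵥ φ v = 0 ∧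
      (e₁ ⬝ᵥ φ v = 1 ∨ e₁ ⬝ᵥ φ v = -1) ∧ C.deg v = 2 := by
  have hvv := D.dotProduct_self v
  have := D.deg_le_two v
  have hres := D.residual_outside_outside hv hv
  have hnonneg := dotProduct_self_nonneg_int (ρ (φ v))
  rw [← dotProduct_self_eq_zero]
  rcases D.coordinates_outside hv with ⟨h, h₂⟩ | ⟨h | h, h₂⟩ | ⟨h, h₂⟩ | ⟨h | h, h₂⟩ <;>
    simp [h, h₂] at h₁ hres <;> omega

theorem adj_a_of_adjw_le_one (D : BalancedChain φ a b x c d e₁ e₂ e₃ f g)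
    (hv : Outside a b x c d v) (hw : C.adjw v ≤ 1) (h₁ : e₁ ⬝ᵥ φ v ≠ 0) : C.graph.Adj v a := by
  obtain ⟨hres, h₂, hs, -⟩ := D.residual_eq_zero_of_adjw_le_one hv hw h₁
  refine (D.dotProduct_cases hv.ne_a).elim (fun ⟨hva, _⟩ => ?_) And.right
  have hva' := D.residual_outside_a hv
  rw [hres, zero_dotProduct, hva, h₂] at hva'
  have ha : e₁ ⬝ᵥ φ a = 0 ∧ e₂ ⬝ᵥ φ a = 1 := by
    have := D.coordinates_a
    rcases hs with hs | hs <;> rw [hs] at hva' <;> omega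
  have haa : ρ (φ a) = 0 := by
    rw [← dotProduct_self_eq_zero]
    refine le_antisymm ?_ (dotProduct_self_nonneg_int _)
    have := (D.dotProduct_self_bounds D.adj_ab).2
    have := D.adjw_a
    rw [D.residual_a_a, ha.1, ha.2]
    omega
  have had := D.residual_a_d
  rw [haa, zero_dotProduct, ha.1, ha.2] at had
  omega

theorem e₁_eq_zero_of_adjw_le_one (D : BalancedChain φ a b x c d e₁ e₂ e₃ f g)
    (hv : Outside a b x c d v) (hw : C.adjw v ≤ 1) : e₁ ⬝ᵥ φ v = 0 := by
  by_contra h₁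
  have hva := D.adj_a_of_adjw_le_one hv hw h₁
  obtain ⟨hres, h₂, -, hdeg⟩ := D.residual_eq_zero_of_adjw_le_one hv hw h₁
  obtain ⟨u, hvu, hua⟩ := Config.exists_adj_ne hdeg a
  have hu : Outside a b x c d u := D.outside_of_adj hv hvu hua fun h =>
    D.not_adj_d_of_adj_a hva.symm hv.ne_b (h ▸ hvu)
  have huv := D.residual_outside_outside hv hu
  rw [hres, zero_dotProduct, D.dotProduct_adj hvu, h₂] at huv
  refine D.not_isBad_outside hv ⟨a, u, hua.symm, hva, hvu, by have := D.adjw_a; omega,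
    D.adjw_pos_of_dotProduct_ne_zero hu ?_⟩
  by_contra! h
  rw [h.1, h.2] at huv
  omega

theorem eq_zero_of_adjw_le_one (D : BalancedChain φ a b x c d e₁ e₂ e₃ f g)
    (hv : Outside a b x c d v) (hw : C.adjw v ≤ 1) : e₁ ⬝ᵥ φ v = 0 ∧ e₂ ⬝ᵥ φ v = 0 :=
  ⟨D.e₁_eq_zero_of_adjw_le_one hv hw, D.reverse.e₁_eq_zero_of_adjw_le_one hv.reverse hw⟩

end BalancedChain

/-- A balanced bad chain together with a vertex `v` outside it of adjusted weight at least `2`. -/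
structure HeavyChain {C : Config} {N : ℕ} (φ : C.V → Fin N → ℤ) (a b x c d : C.V)
    (e₁ e₂ e₃ f g : Fin N → ℤ) (v : C.V) : Prop extends
    BalancedChain φ a b x c d e₁ e₂ e₃ f g where
  outside : Outside a b x c d v
  one_lt_adjw : 1 < C.adjw v

namespace HeavyChain

variable {C : Config} {N : ℕ} {φ : C.V → Fin N → ℤ} {a b x c d : C.V}
  {e₁ e₂ e₃ f g : Fin N → ℤ} {u v z : C.V}

local notation "ρ" => residual [g, f, e₁, e₂, e₃]

theorem reverse (D : HeavyChain φ a b x c d e₁ e₂ e₃ f g v) :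
    HeavyChain φ d c x b a e₂ e₁ e₃ g f v where
  __ := D.toBalancedChain.reverse
  outside := D.outside.reverse
  one_lt_adjw := D.one_lt_adjw

theorem adjw_le_one_of_ne (D : HeavyChain φ a b x c d e₁ e₂ e₃ f g v) (hu : u ≠ v) :
    C.adjw u ≤ 1 := by
  by_contra! h
  exact hu (D.eq_of_one_lt_adjw h D.one_lt_adjw)

theorem adjw_a_eq (D : HeavyChain φ a b x c d e₁ e₂ e₃ f g v) : C.adjw a = 1 := by
  have := D.adjw_le_one_of_ne D.outside.ne_a.symm
  have := D.adjw_a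
  omega

theorem not_adj_a (D : HeavyChain φ a b x c d e₁ e₂ e₃ f g v) : ¬ C.graph.Adj a v := fun h => by
  have hpath : NonBacktracking C.graph [x, b, a, v] :=
    ⟨D.adj_bx.symm, D.ne_ax.symm, D.adj_ab.symm, D.outside.ne_b.symm, h⟩
  have := D.one_lt_adjw
  have := D.adjw_le_three v
  obtain hw | hw : C.adjw v = 2 ∨ C.adjw v = 3 := by omega
  · exact D.false_of_pattern (p := [1, 0, 1, 2]) (by simp [*, D.adjw_x, D.adjw_b, D.adjw_a_eq])
      (by decide) hpath
  · exact D.false_of_pattern (p := [1, 0, 1, 3]) (by simp [*, D.adjw_x, D.adjw_b, D.adjw_a_eq])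
      (by decide) hpath

theorem dotProduct_residual (D : HeavyChain φ a b x c d e₁ e₂ e₃ f g v)
    (hu : Outside a b x c d u) (huv : u ≠ v) (q : Fin N → ℤ) :
    φ u ⬝ᵥ ρ q = φ u ⬝ᵥ q := by
  obtain ⟨h₁, h₂⟩ := D.eq_zero_of_adjw_le_one hu (D.adjw_le_one_of_ne huv)
  obtain ⟨hf, hg, h₃⟩ := D.relations_outside hu
  exact dotProduct_residual_of_orthogonal (by simp [*]) q

theorem dotProduct_aa_le (D : HeavyChain φ a b x c d e₁ e₂ e₃ f g v) : φ a ⬝ᵥ φ a ≤ 3 := by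
  have := (D.dotProduct_self_bounds D.adj_ab).2
  have := D.adjw_a_eq
  omega

theorem dotProduct_va (D : HeavyChain φ a b x c d e₁ e₂ e₃ f g v) : φ v ⬝ᵥ φ a = 0 :=
  D.dotProduct_not_adj D.outside.ne_a fun h => D.not_adj_a h.symm

theorem dotProduct_vv_le (D : HeavyChain φ a b x c d e₁ e₂ e₃ f g v) : φ v ⬝ᵥ φ v ≤ 5 := by
  have := D.dotProduct_self v
  have := D.adjw_le_three v
  have := D.deg_le_two v
  omega

theorem coordinates_a_of_opposite (D : HeavyChain φ a b x c d e₁ e₂ e₃ f g v)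
    (h₁ : e₁ ⬝ᵥ φ v = 1 ∨ e₁ ⬝ᵥ φ v = -1) (h₂ : e₂ ⬝ᵥ φ v = -(e₁ ⬝ᵥ φ v)) :
    ρ (φ v) ⬝ᵥ ρ (φ v) = 1 ∧
    (e₁ ⬝ᵥ φ a = 1 ∧ e₂ ⬝ᵥ φ a = 0 ∧ ρ (φ a) ⬝ᵥ ρ (φ a) = φ a ⬝ᵥ φ a - 2 ∧
        ρ (φ v) ⬝ᵥ ρ (φ a) = -(e₁ ⬝ᵥ φ v) ∨
      e₁ ⬝ᵥ φ a = 0 ∧ e₂ ⬝ᵥ φ a = 0 ∧ ρ (φ a) ⬝ᵥ ρ (φ a) = φ a ⬝ᵥ φ a - 1 ∧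
        ρ (φ v) ⬝ᵥ ρ (φ a) = e₁ ⬝ᵥ φ v) := by
  have hvv := D.residual_outside_outside D.outside D.outside
  have hva := D.residual_outside_a D.outside
  have haa := D.residual_a_a
  have := D.dotProduct_vv_le
  have := D.dotProduct_aa_le
  have := dotProduct_self_nonneg_int (ρ (φ v))
  have := dotProduct_self_nonneg_int (ρ (φ a))
  have hle := two_mul_abs_dotProduct_le (ρ (φ v)) (ρ (φ a))
  rw [D.dotProduct_va, h₂] at hva
  have hne : ρ (φ v) ⬝ᵥ ρ (φ v) ≠ 0 := fun h => by
    rw [dotProduct_self_eq_zero.mp h, zero_dotProduct] at hva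
    rcases h₁ with h₁ | h₁ <;> rw [h₁] at hva <;> omega
  rw [hva] at hle ⊢
  rcases h₁ with h₁ | h₁ <;>
  rcases D.coordinates_a with ⟨ha₁, ha₂ | ha₂ | ha₂⟩ | ⟨ha₁, ha₂ | ha₂⟩ <;>
    simp [h₁, h₂, ha₁, ha₂] at haa hvv hle ⊢ <;> omega

theorem coordinates_d_of_opposite (D : HeavyChain φ a b x c d e₁ e₂ e₃ f g v)
    (h₁ : e₁ ⬝ᵥ φ v = 1 ∨ e₁ ⬝ᵥ φ v = -1) (h₂ : e₂ ⬝ᵥ φ v = -(e₁ ⬝ᵥ φ v)) :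
    e₂ ⬝ᵥ φ d = 1 ∧ e₁ ⬝ᵥ φ d = 0 ∧ ρ (φ d) ⬝ᵥ ρ (φ d) = φ d ⬝ᵥ φ d - 2 ∧
        ρ (φ v) ⬝ᵥ ρ (φ d) = -(e₂ ⬝ᵥ φ v) ∨
      e₂ ⬝ᵥ φ d = 0 ∧ e₁ ⬝ᵥ φ d = 0 ∧ ρ (φ d) ⬝ᵥ ρ (φ d) = φ d ⬝ᵥ φ d - 1 ∧
        ρ (φ v) ⬝ᵥ ρ (φ d) = e₂ ⬝ᵥ φ v := by
  have hρ (p : Fin N → ℤ) : ρ p = residual [f, g, e₂, e₁, e₃] p :=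
    residual_perm (.trans (.swap _ _ _) (.cons _ (.cons _ (.swap _ _ _)))) p
  rw [hρ, hρ]
  exact (D.reverse.coordinates_a_of_opposite (by omega) (by omega)).2

theorem exists_adj_a (D : HeavyChain φ a b x c d e₁ e₂ e₃ f g v) (haa : φ a ⬝ᵥ φ a = 3) :
    ∃ z, φ z ⬝ᵥ ρ (φ a) = -1 ∧ φ z ⬝ᵥ ρ (φ d) = 0 := by
  have hdeg : C.deg a = 2 := by
    have := D.dotProduct_self a
    have := D.adjw_a_eq
    omega
  obtain ⟨z, haz, hzb⟩ := Config.exists_adj_ne hdeg b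
  have hz := D.outside_of_adj_a haz hzb
  have hzv : z ≠ v := fun h => D.not_adj_a (h ▸ haz)
  refine ⟨z, ?_, ?_⟩ <;> rw [D.dotProduct_residual hz hzv]
  · exact D.dotProduct_adj haz.symm
  · exact D.dotProduct_not_adj hz.ne_d (D.not_adj_d_of_adj_a haz hzb)

theorem e₁_a_eq_e₂_d_of_opposite (D : HeavyChain φ a b x c d e₁ e₂ e₃ f g v)
    (h₁ : e₁ ⬝ᵥ φ v = 1 ∨ e₁ ⬝ᵥ φ v = -1) (h₂ : e₂ ⬝ᵥ φ v = -(e₁ ⬝ᵥ φ v))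
    (ha : e₁ ⬝ᵥ φ a = 1) : e₂ ⬝ᵥ φ d = 1 := by
  obtain ⟨hvv, ha⟩ := D.coordinates_a_of_opposite h₁ h₂
  have hd := D.coordinates_d_of_opposite h₁ h₂
  obtain ⟨ha₁, ha₂, haa, hva⟩ := ha.resolve_right (by omega)
  refine (hd.resolve_right fun ⟨hd₂, hd₁, _, hvd⟩ => ?_).1
  have had := D.residual_a_d
  rw [ha₁, ha₂, hd₁, hd₂] at had
  have := D.dotProduct_aa_le
  -- `ρ (φ a) = -(e₁ ⬝ᵥ φ v) • ρ (φ v)`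
  have hzero := dotProduct_eq_zero_of_self_nonpos
    (p := ρ (φ a) + (e₁ ⬝ᵥ φ v) • ρ (φ v)) ?_ (ρ (φ d))
  · rw [add_dotProduct, smul_dotProduct, hvd, had, h₂] at hzero
    rcases h₁ with h₁ | h₁ <;> simp [h₁] at hzero
  · simp only [add_dotProduct, dotProduct_add, smul_dotProduct, dotProduct_smul, smul_eq_mul,
      dotProduct_comm (ρ (φ a)) (ρ (φ v)), hva, hvv]
    rcases h₁ with h₁ | h₁ <;> rw [h₁] <;> omega

theorem false_of_opposite_of_e₁_a (D : HeavyChain φ a b x c d e₁ e₂ e₃ f g v)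
    (h₁ : e₁ ⬝ᵥ φ v = 1 ∨ e₁ ⬝ᵥ φ v = -1) (h₂ : e₂ ⬝ᵥ φ v = -(e₁ ⬝ᵥ φ v))
    (ha : e₁ ⬝ᵥ φ a = 1) : False := by
  have hd := D.e₁_a_eq_e₂_d_of_opposite h₁ h₂ ha
  obtain ⟨ha₁, ha₂, haa, -⟩ := (D.coordinates_a_of_opposite h₁ h₂).2.resolve_right (by omega)
  obtain ⟨hd₂, hd₁, hdd, -⟩ := (D.coordinates_d_of_opposite h₁ h₂).resolve_right (by omega)
  have had := D.residual_a_d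
  rw [ha₁, ha₂, hd₁, hd₂] at had
  have := D.dotProduct_aa_le
  have := D.reverse.dotProduct_aa_le
  have hnorm : (ρ (φ a) + ρ (φ d)) ⬝ᵥ (ρ (φ a) + ρ (φ d)) = φ a ⬝ᵥ φ a + φ d ⬝ᵥ φ d - 6 := by
    simp only [add_dotProduct, dotProduct_add, dotProduct_comm (ρ (φ d)) (ρ (φ a))]
    omega
  have := dotProduct_self_nonneg_int (ρ (φ a) + ρ (φ d))
  obtain ⟨z, hza, hzd⟩ := D.exists_adj_a (by omega)
  have hzero := dotProduct_eq_zero_of_self_nonpos (p := ρ (φ a) + ρ (φ d)) (by omega) (φ z)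
  rw [dotProduct_comm, dotProduct_add] at hzero
  omega

theorem false_of_opposite (D : HeavyChain φ a b x c d e₁ e₂ e₃ f g v)
    (h₁ : e₁ ⬝ᵥ φ v = 1 ∨ e₁ ⬝ᵥ φ v = -1) (h₂ : e₂ ⬝ᵥ φ v = -(e₁ ⬝ᵥ φ v)) : False := by
  obtain ⟨hvv, ha⟩ := D.coordinates_a_of_opposite h₁ h₂
  obtain ⟨ha₁, ha₂, haa, hva⟩ := ha.resolve_left fun ha => D.false_of_opposite_of_e₁_a h₁ h₂ ha.1
  have hd := D.coordinates_d_of_opposite h₁ h₂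
  obtain ⟨hd₂, hd₁, hdd, hvd⟩ := hd.resolve_left fun hd =>
    D.reverse.false_of_opposite_of_e₁_a (by omega) (by omega) hd.1
  have had := D.residual_a_d
  rw [ha₁, ha₂, hd₁, hd₂] at had
  have := D.dotProduct_aa_le
  have := D.reverse.dotProduct_aa_le
  set w := ρ (φ a) - ρ (φ d) - (2 * (e₁ ⬝ᵥ φ v)) • ρ (φ v) with hw
  have hnorm : w ⬝ᵥ w = φ a ⬝ᵥ φ a + φ d ⬝ᵥ φ d - 6 := by
    simp only [hw, sub_dotProduct, dotProduct_sub, smul_dotProduct, dotProduct_smul, smul_eq_mul,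
      dotProduct_comm _ (ρ (φ v)), dotProduct_comm (ρ (φ d)) (ρ (φ a)), hva, hvd, hvv, h₂]
    rcases h₁ with h₁ | h₁ <;> rw [h₁] <;> omega
  have := dotProduct_self_nonneg_int w
  obtain ⟨z, hza, hzd⟩ := D.exists_adj_a (by omega)
  have hzero := dotProduct_eq_zero_of_self_nonpos (by omega : w ⬝ᵥ w ≤ 0) (φ z)
  rw [dotProduct_comm, hw, dotProduct_sub, dotProduct_sub, dotProduct_smul, smul_eq_mul,
    mul_assoc] at hzero
  omega

end HeavyChain

namespace WorkingEmbedding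

variable {C : Config} {N : ℕ} {φ : C.V → Fin N → ℤ} {p q u₁ u₂ v : C.V}

theorem adjw_eq_zero_of_adj (E : WorkingEmbedding C φ) (hv : C.adjw v = 3)
    (hpq : C.graph.Adj p q) (hp : C.adjw p = 1) (hq : C.adjw q ≤ 1) : C.adjw q = 0 := by
  have := E.adjw_nonneg q
  by_contra hne
  exact E.working.2.2.2.2.1 ⟨v, hv⟩ p q hpq hp (by omega)

theorem false_of_unit_at_fork (E : WorkingEmbedding C φ) (hv : 0 < C.adjw v)
    (h₁ : C.graph.Adj v u₁) (h₂ : C.graph.Adj v u₂) (h₁₂ : u₁ ≠ u₂) (hu₁ : C.adjw u₁ = 0)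
    (hbad : ¬ C.IsBad u₁) (hu₂ : C.adjw u₂ ≤ 1) {m : Fin N → ℤ} (hm : m ⬝ᵥ m = 1)
    (hm₁ : m ⬝ᵥ φ u₁ = -1) (hm₂ : m ⬝ᵥ φ u₂ = -1)
    (hmy : ∀ y, C.graph.Adj u₁ y → y ≠ v → m ⬝ᵥ φ y = 0) : False := by
  obtain ⟨y₁, hy₁, hy₁v⟩ := Config.exists_adj_ne (E.deg_eq_two_of_adjw_eq_zero hu₁) v
  have hwy₁ := E.adjw_eq_zero_of_not_isBad hbad h₁.symm hy₁ hy₁v.symm hv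
  have hpath : NonBacktracking C.graph [y₁, u₁, v, u₂] := ⟨hy₁.symm, hy₁v, h₁.symm, h₁₂, h₂⟩
  have hdeg_le := E.deg_le_two u₂
  have hself := E.dotProduct_self u₂
  have hu₂u₂ : φ u₂ ⬝ᵥ φ u₂ ≤ 3 := by omega
  have key := dotProduct_add_two_mul_add_three_mul_eq_zero hm
    (E.dotProduct_self_of_adjw_eq_zero hu₁) (E.dotProduct_self_of_adjw_eq_zero hwy₁) hu₂u₂ hm₁ hm₂
    (E.dotProduct_adj hy₁) (hmy y₁ hy₁ hy₁v) (E.dotProduct_far hpath 1 3)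
    (E.dotProduct_far hpath 0 3)
  have hdeg : C.deg u₂ = 2 := by
    have := key (φ u₂)
    have hu₁u₂ : φ u₁ ⬝ᵥ φ u₂ = 0 := E.dotProduct_far hpath 1 3
    have hy₁u₂ : φ y₁ ⬝ᵥ φ u₂ = 0 := E.dotProduct_far hpath 0 3
    omega
  obtain ⟨y₂, hy₂, hy₂v⟩ := Config.exists_adj_ne hdeg v
  have hpath' : NonBacktracking C.graph [y₁, u₁, v, u₂, y₂] :=
    ⟨hy₁.symm, hy₁v, h₁.symm, h₁₂, h₂, hy₂v.symm, hy₂⟩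
  have hu₁y₂ : φ u₁ ⬝ᵥ φ y₂ = 0 := E.dotProduct_far hpath' 1 4
  have hy₁y₂ : φ y₁ ⬝ᵥ φ y₂ = 0 := E.dotProduct_far hpath' 0 4
  have := key (φ y₂)
  have := E.dotProduct_adj hy₂
  omega

end WorkingEmbedding

/-- A vertex `v` of adjusted weight at least `2` outside the bad part, with vectors `k` and `l`
that behave like `φ v` and `φ a` towards all other outside vertices but are shorter and not
orthogonal. -/
structure ShortenedPair {C : Config} {N : ℕ} (φ : C.V → Fin N → ℤ) (a b x c d v : C.V)
    (k l : Fin N → ℤ) (s : ℤ) : Prop extends BadChain φ a b x c d where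
  outside : Outside a b x c d v
  one_lt_adjw : 1 < C.adjw v
  not_adj_a : ¬ C.graph.Adj a v
  not_adj_d : ¬ C.graph.Adj d v
  sign : s = 1 ∨ s = -1
  k_dotProduct_k : k ⬝ᵥ k = φ v ⬝ᵥ φ v - 3
  l_dotProduct_l : l ⬝ᵥ l = φ a ⬝ᵥ φ a - 1
  k_dotProduct_l : k ⬝ᵥ l = s
  k_dotProduct : ∀ p, Outside a b x c d p → p ≠ v → k ⬝ᵥ φ p = φ v ⬝ᵥ φ p
  l_dotProduct : ∀ p, Outside a b x c d p → p ≠ v → l ⬝ᵥ φ p = φ a ⬝ᵥ φ p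

namespace ShortenedPair

variable {C : Config} {N : ℕ} {φ : C.V → Fin N → ℤ} {a b x c d v u p y z : C.V}
  {k l : Fin N → ℤ} {s : ℤ}

theorem mul_self_sign (R : ShortenedPair φ a b x c d v k l s) : s * s = 1 := by
  rcases R.sign with rfl | rfl <;> rfl

theorem adjw_le_one_of_ne (R : ShortenedPair φ a b x c d v k l s) (hp : p ≠ v) :
    C.adjw p ≤ 1 := by
  by_contra! h
  exact hp (R.eq_of_one_lt_adjw h R.one_lt_adjw)

theorem dotProduct_self_le_three (R : ShortenedPair φ a b x c d v k l s) (hp : p ≠ v) :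
    φ p ⬝ᵥ φ p ≤ 3 := by
  have := R.adjw_le_one_of_ne hp
  have := R.dotProduct_self p
  have := R.deg_le_two p
  omega

theorem adjw_a_eq (R : ShortenedPair φ a b x c d v k l s) : C.adjw a = 1 := by
  have := R.adjw_le_one_of_ne R.outside.ne_a.symm
  have := R.adjw_a
  omega

theorem deg_a_eq_two (R : ShortenedPair φ a b x c d v k l s) (haa : φ a ⬝ᵥ φ a = 3) :
    C.deg a = 2 := by
  have := R.dotProduct_self a
  have := R.adjw_a_eq
  omega

theorem outside_of_adj_v (R : ShortenedPair φ a b x c d v k l s) (hu : C.graph.Adj v u) :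
    Outside a b x c d u :=
  R.outside_of_adj R.outside hu (fun h => R.not_adj_a (h ▸ hu.symm))
    fun h => R.not_adj_d (h ▸ hu.symm)

theorem not_adj_of_adj_v (R : ShortenedPair φ a b x c d v k l s) (hu : C.graph.Adj v u)
    (hpv : p ≠ v) (hp : 0 < C.adjw p) : ¬ C.graph.Adj u p := fun h =>
  R.not_isBad_outside (R.outside_of_adj_v hu)
    ⟨v, p, hpv.symm, hu.symm, h, zero_lt_one.trans R.one_lt_adjw, hp⟩

theorem not_adj_a_of_adj_v (R : ShortenedPair φ a b x c d v k l s) (hu : C.graph.Adj v u) :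
    ¬ C.graph.Adj u a :=
  R.not_adj_of_adj_v hu R.outside.ne_a.symm (by rw [R.adjw_a_eq]; decide)

theorem not_adj_d_of_adj_v (R : ShortenedPair φ a b x c d v k l s) (hu : C.graph.Adj v u) :
    ¬ C.graph.Adj u d :=
  R.not_adj_of_adj_v hu R.outside.ne_d.symm (by have := R.adjw_d; omega)

theorem dotProduct_of_adj_v (R : ShortenedPair φ a b x c d v k l s) (hu : C.graph.Adj v u) :
    k ⬝ᵥ φ u = -1 ∧ l ⬝ᵥ φ u = 0 := by
  have hout := R.outside_of_adj_v hu
  exact ⟨(R.k_dotProduct u hout hu.ne').trans (R.dotProduct_adj hu),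
    (R.l_dotProduct u hout hu.ne').trans
      (R.dotProduct_not_adj hout.ne_a.symm fun h => R.not_adj_a_of_adj_v hu h.symm)⟩

theorem outside_of_adj_adj_v (R : ShortenedPair φ a b x c d v k l s) (hu : C.graph.Adj v u)
    (hy : C.graph.Adj u y) : Outside a b x c d y :=
  R.outside_of_adj (R.outside_of_adj_v hu) hy (fun h => R.not_adj_a_of_adj_v hu (h ▸ hy))
    fun h => R.not_adj_d_of_adj_v hu (h ▸ hy)

theorem k_dotProduct_of_adj_adj_v (R : ShortenedPair φ a b x c d v k l s)
    (hu : C.graph.Adj v u) (hy : C.graph.Adj u y) (hyv : y ≠ v) : k ⬝ᵥ φ y = 0 := by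
  have hpath : NonBacktracking C.graph [v, u, y] := ⟨hu, hyv.symm, hy⟩
  exact (R.k_dotProduct y (R.outside_of_adj_adj_v hu hy) hyv).trans (R.dotProduct_far hpath 0 2)

theorem ne_and_not_adj_v (R : ShortenedPair φ a b x c d v k l s) (hz : C.graph.Adj a z) :
    z ≠ v ∧ ¬ C.graph.Adj z v :=
  ⟨fun h => R.not_adj_a (h ▸ hz), fun h => R.not_adj_a_of_adj_v h.symm hz.symm⟩

theorem dotProduct_of_adj_a (R : ShortenedPair φ a b x c d v k l s) (hz : C.graph.Adj a z)
    (hzb : z ≠ b) : k ⬝ᵥ φ z = 0 ∧ l ⬝ᵥ φ z = -1 := by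
  obtain ⟨hzv, hnadj⟩ := R.ne_and_not_adj_v hz
  have hout := R.outside_of_adj_a hz hzb
  exact ⟨(R.k_dotProduct z hout hzv).trans (R.dotProduct_not_adj hzv.symm fun h => hnadj h.symm),
    (R.l_dotProduct z hout hzv).trans (R.dotProduct_adj hz)⟩

theorem false_of_path (R : ShortenedPair φ a b x c d v k l s) (hv : C.adjw v = 3)
    (hz : C.adjw z = 0) (hpath : NonBacktracking C.graph [a, z, p, v]) : False := by
  have := R.adjw_le_one_of_ne (p := p) (hpath.adj_getElem_succ 2 (by simp)).ne
  have := R.adjw_nonneg p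
  obtain hp | hp : C.adjw p = 0 ∨ C.adjw p = 1 := by omega
  · exact R.false_of_pattern (p := [1, 0, 0, 3]) (by simp [*, R.adjw_a_eq]) (by decide) hpath
  · exact R.false_of_pattern (p := [1, 0, 1, 3]) (by simp [*, R.adjw_a_eq]) (by decide) hpath

theorem l_dotProduct_of_adj_adj_v (R : ShortenedPair φ a b x c d v k l s) (hv : C.adjw v = 3)
    (hu : C.graph.Adj v u) (hy : C.graph.Adj u y) (hyv : y ≠ v) (hwy : C.adjw y = 0) :
    l ⬝ᵥ φ y = 0 := by
  have hout := R.outside_of_adj_adj_v hu hy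
  rw [R.l_dotProduct y hout hyv]
  exact R.dotProduct_not_adj hout.ne_a.symm fun h =>
    R.false_of_path hv hwy ⟨h, (R.outside_of_adj_v hu).ne_a.symm, hy.symm, hyv, hu.symm⟩

theorem dotProduct_vv (R : ShortenedPair φ a b x c d v k l s) :
    φ v ⬝ᵥ φ v = 4 ∨ φ v ⬝ᵥ φ v = 5 := by
  have := R.dotProduct_self v
  have := R.adjw_le_three v
  have := R.deg_le_two v
  have := dotProduct_self_nonneg_int k
  have hk := R.k_dotProduct_k
  have : k ⬝ᵥ k ≠ 0 := fun h => by
    have := R.k_dotProduct_l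
    have := R.sign
    have := dotProduct_eq_zero_of_self_nonpos h.le l
    omega
  omega

theorem exists_adj_a (R : ShortenedPair φ a b x c d v k l s) (haa : φ a ⬝ᵥ φ a = 3)
    (hv : C.adjw v = 3) : ∃ z, C.graph.Adj a z ∧ z ≠ b ∧ C.adjw z = 0 := by
  obtain ⟨z, haz, hzb⟩ := Config.exists_adj_ne (R.deg_a_eq_two haa) b
  exact ⟨z, haz, hzb, R.adjw_eq_zero_of_adj hv haz R.adjw_a_eq
    (R.adjw_le_one_of_ne (R.ne_and_not_adj_v haz).1)⟩

theorem dotProduct_of_adj_a_of_adj_v (R : ShortenedPair φ a b x c d v k l s) (hv : C.adjw v = 3)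
    (haz : C.graph.Adj a z) (hz : C.adjw z = 0) (hvu : C.graph.Adj v u) : φ z ⬝ᵥ φ u = 0 := by
  obtain ⟨hzv, hzv'⟩ := R.ne_and_not_adj_v haz
  exact R.dotProduct_not_adj (fun h => hzv' (h ▸ hvu.symm)) fun h =>
    R.false_of_path hv hz ⟨haz, (R.outside_of_adj_v hvu).ne_a.symm, h, hzv, hvu.symm⟩

theorem dotProduct_of_adj_adj_a (R : ShortenedPair φ a b x c d v k l s) (hv : C.adjw v = 3)
    (haz : C.graph.Adj a z) (hzb : z ≠ b) (hz : C.adjw z = 0) (hzy : C.graph.Adj z y)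
    (hya : y ≠ a) : k ⬝ᵥ φ y = 0 ∧ l ⬝ᵥ φ y = 0 := by
  obtain ⟨hzv, hzv'⟩ := R.ne_and_not_adj_v haz
  have hyv : y ≠ v := fun h => hzv' (h ▸ hzy)
  have hy : Outside a b x c d y := R.outside_of_adj (R.outside_of_adj_a haz hzb) hzy hya fun h =>
    R.not_adj_d_of_adj_a haz hzb (h ▸ hzy)
  have hpath : NonBacktracking C.graph [a, z, y] := ⟨haz, hya.symm, hzy⟩
  rw [R.k_dotProduct y hy hyv, R.l_dotProduct y hy hyv]
  exact ⟨R.dotProduct_not_adj hyv.symm fun h =>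
    R.false_of_path hv hz ⟨haz, hya.symm, hzy, hzv, h.symm⟩, R.dotProduct_far hpath 0 2⟩

theorem false_of_adj_adj_a (R : ShortenedPair φ a b x c d v k l s) (hv : C.adjw v = 3)
    (haz : C.graph.Adj a z) (hz : C.adjw z = 0) (hzy : C.graph.Adj z y) (hya : y ≠ a)
    (hvu : C.graph.Adj v u) (huu : φ u ⬝ᵥ φ u = 3) (huy : C.graph.Adj u y) : False := by
  have hu : C.adjw u = 1 := by
    have := R.dotProduct_self u
    have := R.deg_le_two u
    have := R.adjw_le_one_of_ne hvu.ne'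
    omega
  have hzv := (R.ne_and_not_adj_v haz).2
  have hyv : y ≠ v := fun h => hzv (h ▸ hzy)
  have hy := R.adjw_eq_zero_of_adj hv huy hu (R.adjw_le_one_of_ne hyv)
  exact R.false_of_pattern (p := [3, 1, 0, 0, 1]) (by simp [*, R.adjw_a_eq]) (by decide)
    (l := [v, u, y, z, a])
    ⟨hvu, hyv.symm, huy, fun h => hzv (h ▸ hvu.symm), hzy.symm, hya, haz.symm⟩

theorem exists_orthonormal_of_four (R : ShortenedPair φ a b x c d v k l s)
    (hvv : φ v ⬝ᵥ φ v = 4) :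
    φ a ⬝ᵥ φ a = 3 ∧ ∃ n, IsOrthonormal [n, k] ∧
      ∀ p, n ⬝ᵥ φ p = l ⬝ᵥ φ p - s * (k ⬝ᵥ φ p) := by
  have hk : IsOrthonormal [k] := by
    simp [isOrthonormal_cons, isOrthonormal_nil, R.k_dotProduct_k, hvv]
  have hn (p : C.V) : residual [k] l ⬝ᵥ φ p = l ⬝ᵥ φ p - s * (k ⬝ᵥ φ p) := by
    simp [residual_dotProduct, R.k_dotProduct_l]
  have hll := R.l_dotProduct_l
  have haa : φ a ⬝ᵥ φ a = 3 := by
    by_contra hne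
    have := R.dotProduct_self_le_three R.outside.ne_a.symm
    obtain ⟨u, hu⟩ : ∃ u, C.graph.Adj v u := Config.exists_adj (by
      have := R.dotProduct_self v
      have := R.adjw_le_three v
      omega)
    obtain ⟨hku, hlu⟩ := R.dotProduct_of_adj_v hu
    have hzero := dotProduct_eq_zero_of_self_nonpos (p := residual [k] l) ?_ (φ u)
    · rw [hn, hku, hlu] at hzero
      have := R.sign
      omega
    · rw [hk.residual_dotProduct_residual]
      simp [R.k_dotProduct_l, R.mul_self_sign]
      omega
  refine ⟨haa, residual [k] l, hk.residual_cons ?_, hn⟩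
  simp [R.k_dotProduct_l, R.mul_self_sign, hll, haa]

theorem false_of_four_of_adjw_two (R : ShortenedPair φ a b x c d v k l s)
    (hvv : φ v ⬝ᵥ φ v = 4) (hv : C.adjw v = 2) : False := by
  obtain ⟨-, n, hL, hn⟩ := R.exists_orthonormal_of_four hvv
  have hdeg : C.deg v = 2 := by have := R.dotProduct_self v; omega
  obtain ⟨u₁, u₂, h₁, h₂, h₁₂, hu₁⟩ := R.exists_adj_pair hdeg (R.not_isBad_outside R.outside)
  obtain ⟨hk₁, hl₁⟩ := R.dotProduct_of_adj_v h₁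
  obtain ⟨hk₂, hl₂⟩ := R.dotProduct_of_adj_v h₂
  have hpath : NonBacktracking C.graph [u₁, v, u₂] := ⟨h₁.symm, h₁₂, h₂⟩
  have hu₁u₂ : φ u₁ ⬝ᵥ φ u₂ = 0 := R.dotProduct_far hpath 0 2
  have hexpand := hL.dotProduct_eq_sum (p := φ u₁) (by
    simp [hn, hk₁, hl₁, R.mul_self_sign, R.dotProduct_self_of_adjw_eq_zero hu₁]) (φ u₂)
  simp [hn, hk₁, hl₁, hk₂, hl₂, R.mul_self_sign, hu₁u₂] at hexpand

theorem false_of_four_of_adjw_three (R : ShortenedPair φ a b x c d v k l s)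
    (hvv : φ v ⬝ᵥ φ v = 4) (hv : C.adjw v = 3) : False := by
  obtain ⟨haa, n, hL, hn⟩ := R.exists_orthonormal_of_four hvv
  obtain ⟨z, haz, hzb, hz⟩ := R.exists_adj_a haa hv
  obtain ⟨hkz, hlz⟩ := R.dotProduct_of_adj_a haz hzb
  obtain ⟨y, hzy, hya⟩ := Config.exists_adj_ne (R.deg_eq_two_of_adjw_eq_zero hz) a
  obtain ⟨hky, hly⟩ := R.dotProduct_of_adj_adj_a hv haz hzb hz hzy hya
  obtain ⟨u, hvu⟩ : ∃ u, C.graph.Adj v u :=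
    Config.exists_adj (by have := R.dotProduct_self v; omega)
  obtain ⟨hku, hlu⟩ := R.dotProduct_of_adj_v hvu
  have hzu := R.dotProduct_of_adj_a_of_adj_v hv haz hz hvu
  have hL' : IsOrthonormal (residual [n, k] (φ z) :: [n, k]) := hL.residual_cons (by
    simp [hn, hkz, hlz, R.dotProduct_self_of_adjw_eq_zero hz])
  have huu := R.dotProduct_self_le_three hvu.ne'
  have hbessel := hL'.sum_sq_le (φ u)
  have huu' : φ u ⬝ᵥ φ u = 3 := by
    simp [residual_dotProduct, hn, hku, hlu, hkz, hlz, hzu, R.mul_self_sign] at hbessel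
    omega
  have huy : φ u ⬝ᵥ φ y = -s := by
    simpa [residual_dotProduct, hn, hku, hlu, hkz, hlz, hzu, hky, hly, R.dotProduct_adj hzy]
      using hL'.dotProduct_eq_sum (p := φ u) (by
        simp [residual_dotProduct, hn, hku, hlu, hkz, hlz, hzu, R.mul_self_sign, huu']) (φ y)
  have hne : u ≠ y := by
    rintro rfl
    omega
  have := R.sign
  exact (R.dotProduct_cases hne).elim (by omega) fun h =>
    R.false_of_adj_adj_a hv haz hz hzy hya hvu huu' h.2

theorem adjw_v_eq_three_of_five (R : ShortenedPair φ a b x c d v k l s) (hvv : φ v ⬝ᵥ φ v = 5) :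
    C.adjw v = 3 ∧ C.deg v = 2 := by
  have := R.dotProduct_self v
  have := R.deg_le_two v
  have := R.adjw_le_three v
  omega

theorem exists_orthonormal_of_five (R : ShortenedPair φ a b x c d v k l s)
    (hvv : φ v ⬝ᵥ φ v = 5) :
    ∃ e f, IsOrthonormal [e, f] ∧ (∀ p, k ⬝ᵥ p = e ⬝ᵥ p + f ⬝ᵥ p) ∧ e ⬝ᵥ l = s ∧ f ⬝ᵥ l = 0 := by
  obtain ⟨e, f, hef, hk⟩ := exists_orthonormal_pair (u := k) (by rw [R.k_dotProduct_k, hvv]; rfl)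
  have hk' (p : Fin N → ℤ) : k ⬝ᵥ p = e ⬝ᵥ p + f ⬝ᵥ p := by rw [hk, add_dotProduct]
  have hsum := hk' l ▸ R.k_dotProduct_l
  have hbessel : (e ⬝ᵥ l) * (e ⬝ᵥ l) + (f ⬝ᵥ l) * (f ⬝ᵥ l) ≤ l ⬝ᵥ l := by
    simpa using hef.sum_sq_le l
  have hll := R.l_dotProduct_l
  have := R.dotProduct_self_le_three R.outside.ne_a.symm
  have hl : f ⬝ᵥ l = 0 ∨ e ⬝ᵥ l = 0 := by
    have := mul_self_nonneg (e ⬝ᵥ l)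
    have := mul_self_nonneg (f ⬝ᵥ l)
    have := R.sign
    rcases eq_neg_one_or_zero_or_one (by omega : (e ⬝ᵥ l) * (e ⬝ᵥ l) ≤ 3) with he | he | he <;>
      rcases eq_neg_one_or_zero_or_one (by omega : (f ⬝ᵥ l) * (f ⬝ᵥ l) ≤ 3) with hf | hf | hf <;>
      omega
  rcases hl with hl | hl
  · exact ⟨e, f, hef, hk', by omega, hl⟩
  · exact ⟨f, e, hef.perm (.swap _ _ _), fun p => (hk' p).trans (add_comm _ _), by omega, hl⟩

theorem false_of_five_of_two (R : ShortenedPair φ a b x c d v k l s) (hvv : φ v ⬝ᵥ φ v = 5)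
    (haa : φ a ⬝ᵥ φ a = 2) : False := by
  obtain ⟨e, f, hef, hk, hel, hfl⟩ := R.exists_orthonormal_of_five hvv
  have hl (p : Fin N → ℤ) : l ⬝ᵥ p = s * (e ⬝ᵥ p) := by
    simpa [hel, hfl] using hef.dotProduct_eq_sum (p := l) (by
      simp [R.l_dotProduct_l, haa, hel, hfl, R.mul_self_sign]) p
  have hf (p : C.V) (hp : Outside a b x c d p) (hpv : p ≠ v) : f ⬝ᵥ φ p = k ⬝ᵥ φ p := by
    have hap : φ a ⬝ᵥ φ p = 0 := R.dotProduct_not_adj hp.ne_a.symm fun h => by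
      have := R.dotProduct_self_eq_adjw_add_two R.adj_ab h hp.ne_b.symm
      have := R.adjw_a_eq
      omega
    have he := R.l_dotProduct p hp hpv
    rw [hl, hap] at he
    rw [hk, (mul_eq_zero.mp he).resolve_left (by have := R.sign; omega), zero_add]
  obtain ⟨hv, hdeg⟩ := R.adjw_v_eq_three_of_five hvv
  obtain ⟨u₁, u₂, h₁, h₂, h₁₂, hu₁⟩ := R.exists_adj_pair hdeg (R.not_isBad_outside R.outside)
  have hfu (u : C.V) (hu : C.graph.Adj v u) : f ⬝ᵥ φ u = -1 :=
    (hf u (R.outside_of_adj_v hu) hu.ne').trans (R.dotProduct_of_adj_v hu).1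
  exact R.false_of_unit_at_fork (by omega) h₁ h₂ h₁₂ hu₁
    (R.not_isBad_outside (R.outside_of_adj_v h₁)) (R.adjw_le_one_of_ne h₂.ne')
    (hef.1 f (by simp)) (hfu u₁ h₁) (hfu u₂ h₂) fun y hy hyv =>
      (hf y (R.outside_of_adj_adj_v h₁ hy) hyv).trans (R.k_dotProduct_of_adj_adj_v h₁ hy hyv)

end ShortenedPair

/-- A shortened pair with `φ v` of norm `5` and `φ a` of norm `3`, the neighbour `z` of `a` away
from the bad part, and the orthonormal vectors in terms of which `k`, `l` and `φ z` are `e + f`,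
`s • e + n` and `t - n`. -/
structure FramedPair {C : Config} {N : ℕ} (φ : C.V → Fin N → ℤ) (a b x c d v : C.V)
    (k l : Fin N → ℤ) (s : ℤ) (z : C.V) (e f n t : Fin N → ℤ) : Prop extends
    ShortenedPair φ a b x c d v k l s where
  adjw_v : C.adjw v = 3
  deg_v : C.deg v = 2
  adj_az : C.graph.Adj a z
  adjw_z : C.adjw z = 0
  orthonormal : IsOrthonormal [t, n, e, f]
  k_eq : ∀ p, k ⬝ᵥ p = e ⬝ᵥ p + f ⬝ᵥ p
  l_eq : ∀ p, l ⬝ᵥ p = s * (e ⬝ᵥ p) + n ⬝ᵥ p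
  z_eq : ∀ p, φ z ⬝ᵥ p = t ⬝ᵥ p - n ⬝ᵥ p

theorem ShortenedPair.dotProduct_z_of_five {C : Config} {N : ℕ} {φ : C.V → Fin N → ℤ}
    {a b x c d v u z : C.V} {k l e f n : Fin N → ℤ} {s : ℤ}
    (R : ShortenedPair φ a b x c d v k l s) (hv : C.adjw v = 3) (haz : C.graph.Adj a z)
    (hzb : z ≠ b) (hz : C.adjw z = 0) (hvu : C.graph.Adj v u) (hL : IsOrthonormal [n, e, f])
    (hk : ∀ p, k ⬝ᵥ p = e ⬝ᵥ p + f ⬝ᵥ p) (hl : ∀ p, l ⬝ᵥ p = s * (e ⬝ᵥ p) + n ⬝ᵥ p) :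
    e ⬝ᵥ φ z = 0 ∧ f ⬝ᵥ φ z = 0 ∧ n ⬝ᵥ φ z = -1 := by
  obtain ⟨hkz, hlz⟩ := R.dotProduct_of_adj_a haz hzb
  rw [hk] at hkz
  rw [hl] at hlz
  have hzz := R.dotProduct_self_of_adjw_eq_zero hz
  have hbessel : (n ⬝ᵥ φ z) * (n ⬝ᵥ φ z) + (e ⬝ᵥ φ z) * (e ⬝ᵥ φ z) + (f ⬝ᵥ φ z) * (f ⬝ᵥ φ z) ≤
      φ z ⬝ᵥ φ z := by
    simpa [add_assoc] using hL.sum_sq_le (φ z)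
  have hf : f ⬝ᵥ φ z = -(e ⬝ᵥ φ z) := by omega
  have hn : n ⬝ᵥ φ z = -1 - s * (e ⬝ᵥ φ z) := by omega
  suffices he : e ⬝ᵥ φ z = 0 by simp [he, hf, hn]
  by_contra hne
  have he : e ⬝ᵥ φ z = -s := by
    rw [hn, hf, hzz] at hbessel
    have := mul_self_nonneg (-1 - s * (e ⬝ᵥ φ z))
    rcases R.sign with rfl | rfl <;>
      rcases eq_neg_one_or_zero_or_one
        (by linarith : (e ⬝ᵥ φ z) * (e ⬝ᵥ φ z) ≤ 3) with h | h | h <;>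
      rw [h] at hbessel <;> omega
  have hzu := hL.dotProduct_eq_sum (p := φ z) (by
    simp [hn, hf, he, hzz, R.mul_self_sign]) (φ u)
  have hku := (R.dotProduct_of_adj_v hvu).1
  simp only [List.map_cons, List.map_nil, List.sum_cons, List.sum_nil,
    R.dotProduct_of_adj_a_of_adj_v hv haz hz hvu, hn, hf, he] at hzu
  rw [hk] at hku
  rcases R.sign with rfl | rfl <;> omega

theorem ShortenedPair.exists_framedPair {C : Config} {N : ℕ} {φ : C.V → Fin N → ℤ}
    {a b x c d v : C.V} {k l : Fin N → ℤ} {s : ℤ} (R : ShortenedPair φ a b x c d v k l s)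
    (hvv : φ v ⬝ᵥ φ v = 5) (haa : φ a ⬝ᵥ φ a = 3) :
    ∃ z e f n t, FramedPair φ a b x c d v k l s z e f n t := by
  obtain ⟨e, f, hef, hk, hel, hfl⟩ := R.exists_orthonormal_of_five hvv
  obtain ⟨hv, hdeg⟩ := R.adjw_v_eq_three_of_five hvv
  obtain ⟨z, haz, hzb, hz⟩ := R.exists_adj_a haa hv
  obtain ⟨u, hvu⟩ : ∃ u, C.graph.Adj v u := Config.exists_adj (hdeg ▸ one_le_two)
  have hL : IsOrthonormal [residual [e, f] l, e, f] :=
    hef.residual_cons (by simp [hel, hfl, R.l_dotProduct_l, haa, R.mul_self_sign])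
  have hl (p : Fin N → ℤ) : l ⬝ᵥ p = s * (e ⬝ᵥ p) + residual [e, f] l ⬝ᵥ p := by
    simp [residual_dotProduct, hel, hfl]
  obtain ⟨hez, hfz, hnz⟩ := R.dotProduct_z_of_five hv haz hzb hz hvu hL hk hl
  exact ⟨z, e, f, residual [e, f] l, residual [residual [e, f] l, e, f] (φ z), R, hv, hdeg, haz, hz,
    hL.residual_cons (by simp [hez, hfz, hnz, R.dotProduct_self_of_adjw_eq_zero hz]), hk, hl,
    fun p => by rw [residual_dotProduct _ (φ z)]; simp [hez, hfz, hnz]⟩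

namespace FramedPair

variable {C : Config} {N : ℕ} {φ : C.V → Fin N → ℤ} {a b x c d v u u₁ u₂ y z : C.V}
  {k l e f n t : Fin N → ℤ} {s : ℤ}

theorem bessel (R : FramedPair φ a b x c d v k l s z e f n t) (p : Fin N → ℤ) :
    (t ⬝ᵥ p) * (t ⬝ᵥ p) + (n ⬝ᵥ p) * (n ⬝ᵥ p) + (e ⬝ᵥ p) * (e ⬝ᵥ p) + (f ⬝ᵥ p) * (f ⬝ᵥ p) ≤
      p ⬝ᵥ p := by
  simpa [add_assoc] using R.orthonormal.sum_sq_le p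

theorem coordinates_of_adj_v (R : FramedPair φ a b x c d v k l s z e f n t)
    (hu : C.graph.Adj v u) :
    (e ⬝ᵥ φ u = 0 ∧ f ⬝ᵥ φ u = -1) ∨
      (φ u ⬝ᵥ φ u = 3 ∧ e ⬝ᵥ φ u = -1 ∧ f ⬝ᵥ φ u = 0 ∧ n ⬝ᵥ φ u = s ∧ t ⬝ᵥ φ u = s) := by
  obtain ⟨hku, hlu⟩ := R.dotProduct_of_adj_v hu
  have hzu := R.dotProduct_of_adj_a_of_adj_v R.adjw_v R.adj_az R.adjw_z hu
  rw [R.k_eq] at hku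
  rw [R.l_eq] at hlu
  rw [R.z_eq] at hzu
  have hbessel := R.bessel (φ u)
  have := R.dotProduct_self_le_three hu.ne'
  have hf : f ⬝ᵥ φ u = -1 - e ⬝ᵥ φ u := by omega
  have hn : n ⬝ᵥ φ u = -(s * (e ⬝ᵥ φ u)) := by omega
  have ht : t ⬝ᵥ φ u = -(s * (e ⬝ᵥ φ u)) := by omega
  rw [hf, hn, ht] at hbessel ⊢
  have hss := R.mul_self_sign
  have he : (e ⬝ᵥ φ u) * (e ⬝ᵥ φ u) ≤ 3 := by nlinarith only [hbessel, this]
  rcases R.sign with rfl | rfl <;>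
    rcases eq_neg_one_or_zero_or_one he with h | h | h <;> rw [h] at hbessel ⊢ <;> omega

theorem ne_z_of_adj_adj_v (R : FramedPair φ a b x c d v k l s z e f n t)
    (hu : C.graph.Adj v u) (hy : C.graph.Adj u y) : z ≠ y := by
  rintro rfl
  have := R.dotProduct_of_adj_a_of_adj_v R.adjw_v R.adj_az R.adjw_z hu
  have := R.dotProduct_adj hy.symm
  omega

theorem coordinates_of_adj_adj_v (R : FramedPair φ a b x c d v k l s z e f n t)
    (hu : C.graph.Adj v u) (hy : C.graph.Adj u y) (hyv : y ≠ v) (hwy : C.adjw y = 0) :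
    e ⬝ᵥ φ y = -(f ⬝ᵥ φ y) ∧ n ⬝ᵥ φ y = s * (f ⬝ᵥ φ y) ∧
      t ⬝ᵥ φ y = s * (f ⬝ᵥ φ y) + φ z ⬝ᵥ φ y := by
  have hky := R.k_dotProduct_of_adj_adj_v hu hy hyv
  have hly := R.l_dotProduct_of_adj_adj_v R.adjw_v hu hy hyv hwy
  rw [R.k_eq] at hky
  rw [R.l_eq] at hly
  have he : e ⬝ᵥ φ y = -(f ⬝ᵥ φ y) := by omega
  rw [he, mul_neg] at hly
  rw [R.z_eq]
  omega

theorem f_dotProduct_of_adj_adj_v (R : FramedPair φ a b x c d v k l s z e f n t)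
    (hu : C.graph.Adj v u) (hwu : C.adjw u = 0) (hy : C.graph.Adj u y) (hyv : y ≠ v) :
    f ⬝ᵥ φ y = 0 := by
  have hwy : C.adjw y = 0 :=
    R.adjw_eq_zero_of_not_isBad (R.not_isBad_outside (R.outside_of_adj_v hu)) hu.symm hy hyv.symm
      (zero_lt_one.trans R.one_lt_adjw)
  obtain ⟨he, hn, ht⟩ := R.coordinates_of_adj_adj_v hu hy hyv hwy
  have hzu : z ≠ u := fun h => (R.ne_and_not_adj_v R.adj_az).2 (h ▸ hu.symm)
  have hzy : φ z ⬝ᵥ φ y = 0 := R.dotProduct_not_adj (R.ne_z_of_adj_adj_v hu hy) fun h =>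
    R.false_of_pattern (p := [1, 0, 0, 0, 3]) (l := [a, z, y, u, v])
      (by simp [R.adjw_a_eq, R.adjw_z, R.adjw_v, hwu, hwy]) (by decide)
      ⟨R.adj_az, (R.outside_of_adj_adj_v hu hy).ne_a.symm, h, hzu, hy.symm, hyv, hu.symm⟩
  have hbessel := R.bessel (φ y)
  rw [he, hn, ht, hzy, add_zero, R.dotProduct_self_of_adjw_eq_zero hwy, mul_mul_mul_comm,
    R.mul_self_sign] at hbessel
  nlinarith only [hbessel, mul_self_nonneg (f ⬝ᵥ φ y)]

theorem coordinates_of_adj_v_eq (R : FramedPair φ a b x c d v k l s z e f n t)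
    (hu : C.graph.Adj v u) : e ⬝ᵥ φ u = 0 ∧ f ⬝ᵥ φ u = -1 := by
  refine (R.coordinates_of_adj_v hu).resolve_right fun ⟨huu, heu, hfu, hnu, htu⟩ => ?_
  have := R.dotProduct_self u
  have := R.deg_le_two u
  have := R.adjw_le_one_of_ne hu.ne'
  obtain ⟨y, hy, hyv⟩ := Config.exists_adj_ne (by omega : C.deg u = 2) v
  have hwy := R.adjw_eq_zero_of_adj R.adjw_v hy (by omega) (R.adjw_le_one_of_ne hyv)
  obtain ⟨hey, hny, hty⟩ := R.coordinates_of_adj_adj_v hu hy hyv hwy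
  have hexpand := R.orthonormal.dotProduct_eq_sum (p := φ u)
    (by simp [heu, hfu, hnu, htu, huu, R.mul_self_sign]) (φ y)
  have huy : -1 = 3 * (f ⬝ᵥ φ y) + s * (φ z ⬝ᵥ φ y) := by
    simp only [List.map_cons, List.map_nil, List.sum_cons, List.sum_nil, heu, hfu, hnu, htu, hey,
      hny, hty, R.dotProduct_adj hy] at hexpand
    linear_combination hexpand + 2 * (f ⬝ᵥ φ y) * R.mul_self_sign
  refine (R.dotProduct_cases (R.ne_z_of_adj_adj_v hu hy)).elim (fun h => ?_) fun h =>
    R.false_of_adj_adj_a R.adjw_v R.adj_az R.adjw_z h.2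
      (R.outside_of_adj_adj_v hu hy).ne_a hu huu hy
  rw [h.1] at huy
  omega

theorem false (R : FramedPair φ a b x c d v k l s z e f n t) : False := by
  obtain ⟨u₁, u₂, h₁, h₂, h₁₂, hu₁⟩ := R.exists_adj_pair R.deg_v (R.not_isBad_outside R.outside)
  exact R.false_of_unit_at_fork (zero_lt_one.trans R.one_lt_adjw) h₁ h₂ h₁₂ hu₁
    (R.not_isBad_outside (R.outside_of_adj_v h₁)) (R.adjw_le_one_of_ne h₂.ne')
    (R.orthonormal.1 f (by simp)) (R.coordinates_of_adj_v_eq h₁).2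
    (R.coordinates_of_adj_v_eq h₂).2 fun y hy hyv => R.f_dotProduct_of_adj_adj_v h₁ hu₁ hy hyv

end FramedPair

theorem ShortenedPair.false {C : Config} {N : ℕ} {φ : C.V → Fin N → ℤ} {a b x c d v : C.V}
    {k l : Fin N → ℤ} {s : ℤ} (R : ShortenedPair φ a b x c d v k l s) : False := by
  rcases R.dotProduct_vv with hvv | hvv
  · have := R.one_lt_adjw
    have := R.adjw_le_three v
    obtain hv | hv : C.adjw v = 2 ∨ C.adjw v = 3 := by omega
    · exact R.false_of_four_of_adjw_two hvv hv
    · exact R.false_of_four_of_adjw_three hvv hv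
  · have := R.dotProduct_self_le_three R.outside.ne_a.symm
    have := R.dotProduct_self_bounds R.adj_ab
    have := R.adjw_a
    obtain haa | haa : φ a ⬝ᵥ φ a = 2 ∨ φ a ⬝ᵥ φ a = 3 := by omega
    · exact R.false_of_five_of_two hvv haa
    · obtain ⟨z, e, f, n, t, F⟩ := R.exists_framedPair hvv haa
      exact F.false

namespace HeavyChain

variable {C : Config} {N : ℕ} {φ : C.V → Fin N → ℤ} {a b x c d : C.V}
  {e₁ e₂ e₃ f g : Fin N → ℤ} {v : C.V}

local notation "ρ" => residual [g, f, e₁, e₂, e₃]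

theorem coordinates_a_of_e₂_eq_zero (D : HeavyChain φ a b x c d e₁ e₂ e₃ f g v)
    (h₁ : e₁ ⬝ᵥ φ v = 1 ∨ e₁ ⬝ᵥ φ v = -1) (h₂ : e₂ ⬝ᵥ φ v = 0) :
    e₁ ⬝ᵥ φ a = 0 ∧ e₂ ⬝ᵥ φ a = 0 := by
  have hvv := D.residual_outside_outside D.outside D.outside
  have hva := D.residual_outside_a D.outside
  have haa := D.residual_a_a
  have := D.dotProduct_vv_le
  have := D.dotProduct_aa_le
  have := dotProduct_self_nonneg_int (ρ (φ a))
  have hzero := fun h => dotProduct_eq_zero_of_self_nonpos (p := ρ (φ a)) h (ρ (φ v))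
  have hle := two_mul_abs_dotProduct_le (ρ (φ v)) (ρ (φ a))
  rw [dotProduct_comm (ρ (φ a)) (ρ (φ v)), hva] at hzero
  rw [hva] at hle
  rcases h₁ with h₁ | h₁ <;>
  rcases D.coordinates_a with ⟨ha₁, ha₂ | ha₂ | ha₂⟩ | ⟨ha₁, ha₂ | ha₂⟩ <;>
    simp [h₁, h₂, ha₁, ha₂, D.dotProduct_va] at hle hzero hvv haa ⊢ <;> omega

theorem shortenedPair (D : HeavyChain φ a b x c d e₁ e₂ e₃ f g v)
    (h₁ : e₁ ⬝ᵥ φ v = 1 ∨ e₁ ⬝ᵥ φ v = -1) (h₂ : e₂ ⬝ᵥ φ v = 0) :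
    ShortenedPair φ a b x c d v (ρ (φ v)) (ρ (φ a)) (e₁ ⬝ᵥ φ v) := by
  obtain ⟨ha₁, ha₂⟩ := D.coordinates_a_of_e₂_eq_zero h₁ h₂
  refine ⟨D.toBadChain, D.outside, D.one_lt_adjw, D.not_adj_a, D.reverse.not_adj_a, h₁, ?_, ?_, ?_,
    fun p hp hpv => ?_, fun p hp hpv => ?_⟩
  · rw [D.residual_outside_outside D.outside D.outside, h₂]
    rcases h₁ with h₁ | h₁ <;> simp [h₁]
  · simp [D.residual_a_a, ha₁, ha₂]
  · simp [D.residual_outside_a D.outside, D.dotProduct_va, ha₁, ha₂]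
  all_goals rw [dotProduct_comm, D.dotProduct_residual hp hpv, dotProduct_comm]

end HeavyChain

theorem BalancedChain.dotProduct_outside_eq_zero {C : Config} {N : ℕ} {φ : C.V → Fin N → ℤ}
    {a b x c d v : C.V} {e₁ e₂ e₃ f g : Fin N → ℤ} (D : BalancedChain φ a b x c d e₁ e₂ e₃ f g)
    (hv : Outside a b x c d v) : e₁ ⬝ᵥ φ v = 0 ∧ e₂ ⬝ᵥ φ v = 0 ∧ e₃ ⬝ᵥ φ v = 0 := by
  suffices h : e₁ ⬝ᵥ φ v = 0 ∧ e₂ ⬝ᵥ φ v = 0 from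
    ⟨h.1, h.2, by rw [(D.relations_outside hv).2.2, h.1, h.2]; rfl⟩
  rcases le_or_gt (C.adjw v) 1 with hw | hw
  · exact D.eq_zero_of_adjw_le_one hv hw
  have H : HeavyChain φ a b x c d e₁ e₂ e₃ f g v := ⟨D, hv, hw⟩
  rcases D.coordinates_outside hv with h | ⟨h₁, h₂⟩ | ⟨h₁, h₂⟩ | ⟨h₁, h₂⟩
  · exact h
  · exact (H.shortenedPair h₁ h₂).false.elim
  · exact (H.reverse.shortenedPair h₂ h₁).false.elim
  · exact (H.false_of_opposite h₁ h₂).elim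

theorem BadChain.disjoint_supp {C : Config} {N : ℕ} {φ : C.V → Fin N → ℤ} {a b x c d v : C.V}
    (H : BadChain φ a b x c d) (hv : Outside a b x c d v) : Disjoint (supp (φ v)) (supp (φ x)) := by
  rw [Finset.disjoint_left]
  intro i hvi hxi
  simp only [supp, Finset.mem_filter, Finset.mem_univ, true_and] at hvi hxi
  suffices h : ∃ e₁ e₂ e₃ f L, Frame φ b x e₁ e₂ e₃ f L ∧
      e₁ ⬝ᵥ φ v = 0 ∧ e₂ ⬝ᵥ φ v = 0 ∧ e₃ ⬝ᵥ φ v = 0 by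
    obtain ⟨e₁, e₂, e₃, f, L, F, h₁, h₂, h₃⟩ := h
    simpa [h₁, h₂, h₃] using F.exists_dotProduct_ne_zero hxi hvi
  obtain ⟨e₁, e₂, e₃, f, ⟨hc, g, F, hφc⟩ | ⟨hc, g, h, F, hφc⟩ | ⟨hc, h, F, hφc⟩⟩ := H.exists_frame_c
  · have D : BalancedChain φ a b x c d e₁ e₂ e₃ f g := ⟨H, hc, F, hφc⟩
    exact ⟨e₁, e₂, e₃, f, [g], F, D.dotProduct_outside_eq_zero hv⟩
  · have D : DisjointChain φ a b x c d e₁ e₂ e₃ f g h := ⟨H, hc, F, hφc⟩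
    exact ⟨e₁, e₂, e₃, f, [g, h], F, D.dotProduct_outside_eq_zero hv⟩
  · have D : OverlapChain φ a b x c d e₁ e₂ e₃ f h := ⟨H, hc, F, hφc⟩
    exact ⟨e₁, e₂, e₃, f, [h], F, D.dotProduct_outside_eq_zero hv⟩

namespace Config

variable {C : Config} {m : ℕ} {v : ℕ → C.V} {x : C.V} {i j : ℕ}

theorem IsChain.nonBacktracking (h : C.IsChain m v) (n : ℕ) (hin : i + n ≤ m) :
    NonBacktracking C.graph ((List.range' i (n + 1)).map v) := by
  induction n generalizing i with
  | zero => trivial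
  | succ n ih =>
    have hadj : C.graph.Adj (v i) (v (i + 1)) := h.2 i (by omega)
    cases n with
    | zero => exact hadj
    | succ n =>
      refine ⟨hadj, fun heq => ?_, ih (by omega)⟩
      have := h.1 i (by omega) (i + 1 + 1) (by omega) heq
      omega

theorem IsChain.eq_middle_of_adj (hC : C.graph.IsAcyclic) (h : C.IsChain m v) (hij : i < j)
    (hj : j ≤ m) (hxi : C.graph.Adj x (v i)) (hxj : C.graph.Adj x (v j)) :
    j = i + 2 ∧ x = v (i + 1) := by
  have hmem {k n : ℕ} (hk : k + n = j) : v j ∈ (List.range' k (n + 1)).map v :=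
    List.mem_map_of_mem (by rw [List.mem_range'_1]; omega)
  obtain ⟨n, rfl⟩ : ∃ n, j = i + 1 + n := ⟨j - (i + 1), by omega⟩
  by_cases hx : x = v (i + 1)
  · subst hx
    match n with
    | 0 => exact (C.graph.loopless.irrefl _ hxj).elim
    | 1 => exact ⟨rfl, rfl⟩
    | n + 2 =>
      have hpath := h.nonBacktracking (i := i + 1) (n + 2) hj
      exact ((hpath.ne_and_not_adj_of_mem hC (hmem (by omega))).2 hxj).elim
  · have hpath : NonBacktracking C.graph (x :: v i :: (List.range' (i + 1) (n + 1)).map v) :=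
      ⟨hxi, hx, h.nonBacktracking (n + 1) (by omega)⟩
    exact ((hpath.ne_and_not_adj_of_mem hC (hmem rfl)).2 hxj).elim

end Config

theorem exists_eq_of_mem_badPatterns : ∀ p ∈ badPatterns, ∀ i < p.length,
    (p.map Prod.snd)[i]? = some true → (p.map Prod.snd)[i + 1]? = some false →
    (p.map Prod.snd)[i + 2]? = some true →
    i = 1 ∧ ∃ w ∈ [0, 1], ∃ w' ∈ [1, 2],
      p = [(1, false), (0, true), (1, false), (w, true), (w', false)] := by
  decide

namespace WorkingEmbedding

variable {C : Config} {N : ℕ} {φ : C.V → Fin N → ℤ} {x : C.V} {mb : ℕ} {vb : ℕ → C.V}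

theorem badChain_of_isBadPartChain (E : WorkingEmbedding C φ) {w w' : ℤ}
    (h : C.IsBadPartChain [(1, false), (0, true), (1, false), (w, true), (w', false)] mb vb)
    (hw : w = 0 ∨ w = 1) (hw' : w' = 1 ∨ w' = 2) :
    BadChain φ (vb 0) (vb 1) (vb 2) (vb 3) (vb 4) := by
  obtain ⟨hchain, hlen, hadjw, hisBad⟩ := h
  obtain rfl : mb = 4 := by simpa using hlen
  refine ⟨E, hchain.nonBacktracking (i := 0) 4 le_rfl, Or.inl (hadjw 0), hadjw 1, hadjw 2,
    hadjw 3 ▸ hw, hadjw 4 ▸ hw', fun p hp => ?_⟩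
  obtain ⟨i, hi, rfl⟩ := (hisBad p).1 hp
  fin_cases i
  · exact absurd hi Bool.false_ne_true
  · exact Or.inl rfl
  · exact absurd hi Bool.false_ne_true
  · exact Or.inr rfl
  · exact absurd hi Bool.false_ne_true

theorem badChain_of_adj_flagged (E : WorkingEmbedding C φ) {p : List (ℤ × Bool)}
    (hp : p ∈ badPatterns) (h : C.IsBadPartChain p mb vb) (hx : ¬ C.IsBad x)
    {i j : Fin p.length} (hij : i < j) (hi : (p.get i).2 = true) (hj : (p.get j).2 = true)
    (hxi : C.graph.Adj x (vb i)) (hxj : C.graph.Adj x (vb j)) :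
    mb = 4 ∧ BadChain φ (vb 0) (vb 1) x (vb 3) (vb 4) := by
  obtain ⟨hchain, hlen, -, hisBad⟩ := id h
  obtain ⟨i, hi'⟩ := i
  obtain ⟨j, hj'⟩ := j
  obtain ⟨rfl, rfl⟩ := hchain.eq_middle_of_adj E.linear.2 hij (by rw [Fin.val_mk]; omega) hxi hxj
  have hi₁ : i + 1 < p.length := (Nat.lt_succ_self _).trans hj'
  have hmid : p[i + 1].2 = false := by
    rw [← Bool.not_eq_true]
    exact fun hflag => hx ((hisBad _).2 ⟨⟨i + 1, hi₁⟩, hflag, rfl⟩)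
  obtain ⟨rfl, w, hw, w', hw', rfl⟩ := exists_eq_of_mem_badPatterns p hp i hi'
    (by simpa [hi'] using hi) (by simpa [hi₁] using hmid)
    (by simpa [hj'] using hj)
  exact ⟨by simpa using hlen, E.badChain_of_isBadPartChain h (by simpa using hw)
    (by simpa using hw')⟩

end WorkingEmbedding

end

/-- Lemma 5.9: if `x` is not bad but is adjacent to two bad vertices, then every vertex
whose support meets that of `x` lies in the bad part. -/
theorem statement10 (C : Config) (hlin : C.IsLinear) (hwc : C.WorkingConditions)
    (hbad : ∃ y : C.V, C.IsBad y) (N : ℕ) (φ : C.V → Fin N → ℤ)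
    (hφ : C.IsEmbedding N φ)
    (x : C.V) (hxnb : ¬ C.IsBad x)
    (y₁ y₂ : C.V) (hy : y₁ ≠ y₂) (hb₁ : C.IsBad y₁) (hb₂ : C.IsBad y₂)
    (ha₁ : C.graph.Adj x y₁) (ha₂ : C.graph.Adj x y₂)
    (v : C.V) (hvx : v ≠ x) (hsupp : (supp (φ v) ∩ supp (φ x)).Nonempty) :
    ∀ p ∈ badPatterns, ∀ mb (vb : ℕ → C.V), C.IsBadPartChain p mb vb →
      ∃ i ≤ mb, vb i = v := by
  intro p hp mb vb hpart
  have E : WorkingEmbedding C φ := ⟨hlin, hwc, hφ⟩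
  obtain ⟨i, hi, rfl⟩ := (hpart.2.2.2 y₁).1 hb₁
  obtain ⟨j, hj, rfl⟩ := (hpart.2.2.2 y₂).1 hb₂
  obtain ⟨rfl, H⟩ : mb = 4 ∧ BadChain φ (vb 0) (vb 1) x (vb 3) (vb 4) := by
    rcases lt_or_gt_of_ne (ne_of_apply_ne (fun k : Fin p.length => vb k) hy) with hij | hji
    · exact E.badChain_of_adj_flagged hp hpart hxnb hij hi hj ha₁ ha₂
    · exact E.badChain_of_adj_flagged hp hpart hxnb hji hj hi ha₂ ha₁
  by_contra! hv
  have hout : Outside (vb 0) (vb 1) x (vb 3) (vb 4) v :=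
    ⟨(hv 0 (by decide)).symm, (hv 1 (by decide)).symm, hvx, (hv 3 (by decide)).symm,
      (hv 4 (by decide)).symm⟩
  exact hsupp.ne_empty (Finset.disjoint_iff_inter_eq_empty.mp (H.disjoint_supp hout))

end LensPaper
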